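/- The difference operators D^{−(n)}_q(t), D^{(n)}_q(t_0,t_1;t), and D^{+(n)}_q(t_0,t_1,t_2,t_3;t) take BC_n-symmetric Laurent polynomials to BC_n-symmetric Laurent polynomials and act triangularly with respect to dominance of monomials; specifically, for any partition λ with at most n parts: D^{−(n)}_q(t) m_λ = q^{−|λ|/2} ∏_{1≤i≤n}(1 − q^{λ_i} t^{n−i}) m_{λ−1^n} plus a linear combination of m_μ with μ strictly dominated by λ−1^n (and the leading term is interpreted as 0 if λ_n = 0); D^{(n)}_q(t_0,t_1;t) m_λ = q^{−|λ|/2} ∏_{1≤i≤n}(1 − q^{λ_i} t^{n−i} t_0 t_1) m_λ plus a linear combination of m_μ with μ strictly dominated by λ; and D^{+(n)}_q(t_0,t_1,t_2,t_3;t) m_λ = q^{−|λ|/2} ∏_{1≤i≤n}(1 − q^{λ_i} t^{n−i} t_0 t_1 t_2 t_3) m_{λ+1^n} plus a linear combination of m_μ with μ strictly dominated by λ+1^n. -/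

import Mathlib

open scoped BigOperators
open Finset MeasureTheory

noncomputable section

/-- The infinite q-Pochhammer symbol `(x;q) = ∏_{j ≥ 0} (1 - q^j x)`. -/
def qPoch (x q : ℂ) : ℂ := ∏' j : ℕ, (1 - q ^ j * x)

/-- The finite q-Pochhammer symbol `(x;q)_k`. -/
def qPochFin (x q : ℂ) (k : ℕ) : ℂ := ∏ j ∈ Finset.range k, (1 - q ^ j * x)

/-- `(a z^{±1}; q) = (a z; q) (a z⁻¹; q)`. -/
def qPochPM (a z q : ℂ) : ℂ := qPoch (a * z) q * qPoch (a * z⁻¹) q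

/-- Normalized contour integral over the unit torus:
`∫_{T^n} F(z) ∏_i dz_i / (2 π √-1 z_i)`, parametrized by `z_i = exp(√-1 θ_i)`. -/
def torusAvg (n : ℕ) (F : (Fin n → ℂ) → ℂ) : ℂ :=
  ((2 * Real.pi : ℂ))⁻¹ ^ n *
    ∫ θ in Set.univ.pi fun _ : Fin n => Set.Ioc (0 : ℝ) (2 * Real.pi),
      F fun i => Complex.exp (Complex.I * (θ i : ℂ))

/-- The cross factor `(z w^{±1};q)(z⁻¹ w^{±1};q) / ((t z w^{±1};q)(t z⁻¹ w^{±1};q))`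
appearing in the Koornwinder density. -/
def koornCross (q t z w : ℂ) : ℂ :=
  (qPochPM z w q * qPochPM z⁻¹ w q) / (qPochPM (t * z) w q * qPochPM (t * z⁻¹) w q)

/-- The Koornwinder density `Δ^{(n)}(z; t₀,t₁,t₂,t₃; q,t)`. -/
def koornWeight (n : ℕ) (t0 t1 t2 t3 q t : ℂ) (z : Fin n → ℂ) : ℂ :=
  (∏ i, (qPoch ((z i) ^ 2) q * qPoch (((z i)⁻¹) ^ 2) q) /
      (qPochPM t0 (z i) q * qPochPM t1 (z i) q * qPochPM t2 (z i) q * qPochPM t3 (z i) q)) *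
  ∏ i, ∏ j, if i < j then koornCross q t (z i) (z j) else 1

/-- The (unnormalized) Koornwinder integral `⟨f⟩'^{(n)}_{t₀,t₁,t₂,t₃;q,t}`. -/
def koornInner' (n : ℕ) (t0 t1 t2 t3 q t : ℂ) (f : (Fin n → ℂ) → ℂ) : ℂ :=
  qPoch q q ^ n / (qPoch t q ^ n * 2 ^ n * (Nat.factorial n : ℂ)) *
    torusAvg n fun z => f z * koornWeight n t0 t1 t2 t3 q t z

/-- The normalized Koornwinder integral `⟨f⟩ = ⟨f⟩'/⟨1⟩'`. -/
def koornInner (n : ℕ) (t0 t1 t2 t3 q t : ℂ) (f : (Fin n → ℂ) → ℂ) : ℂ :=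
  koornInner' n t0 t1 t2 t3 q t f / koornInner' n t0 t1 t2 t3 q t fun _ => 1

/-- A function is a Laurent polynomial in `z₁, …, z_n` on nonzero arguments. -/
def IsLaurent (n : ℕ) (f : (Fin n → ℂ) → ℂ) : Prop :=
  ∃ c : (Fin n → ℤ) →₀ ℂ, ∀ z : Fin n → ℂ, (∀ i, z i ≠ 0) →
    f z = c.sum fun m a => a * ∏ i, z i ^ m i

/-- `BC_n`-symmetric Laurent polynomial: a Laurent polynomial invariant under permutations
of the variables and under each inversion `z_i ↦ z_i⁻¹`. -/
def IsBCSymmetric (n : ℕ) (f : (Fin n → ℂ) → ℂ) : Prop :=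
  IsLaurent n f ∧
  (∀ σ : Equiv.Perm (Fin n), ∀ z : Fin n → ℂ, (∀ i, z i ≠ 0) → f (z ∘ σ) = f z) ∧
  (∀ k : Fin n, ∀ z : Fin n → ℂ, (∀ i, z i ≠ 0) → f (Function.update z k (z k)⁻¹) = f z)

/-- The orbit of an exponent vector under signed permutations. -/
def signedOrbit (n : ℕ) (lam : Fin n → ℤ) : Finset (Fin n → ℤ) :=
  Finset.image
    (fun p : Equiv.Perm (Fin n) × (Fin n → Bool) =>
      fun i => if p.2 i then -lam (p.1 i) else lam (p.1 i))
    Finset.univ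

/-- The `BC_n`-symmetric monomial `m_λ`: the orbit sum of `∏ i, z_i^{λ_i}` under the
hyperoctahedral group. -/
def bcMono (n : ℕ) (lam : Fin n → ℤ) (z : Fin n → ℂ) : ℂ :=
  ∑ μ ∈ signedOrbit n lam, ∏ i, z i ^ μ i

/-- Natural-number exponent vectors coerced to integers. -/
def natToZ {n : ℕ} (lam : Fin n → ℕ) : Fin n → ℤ := fun i => (lam i : ℤ)

/-- `μ` is dominated by `λ`: all partial sums of `μ` are at most those of `λ`. -/
def Dominates {n : ℕ} (lam mu : Fin n → ℤ) : Prop :=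
  ∀ k : ℕ, (∑ i ∈ Finset.univ.filter fun i : Fin n => (i : ℕ) < k, mu i)
    ≤ ∑ i ∈ Finset.univ.filter fun i : Fin n => (i : ℕ) < k, lam i

/-- `μ` is strictly dominated by `λ`. -/
def StrictlyDominated {n : ℕ} (mu lam : Fin n → ℤ) : Prop :=
  Dominates lam mu ∧ mu ≠ lam

/-- A partition with at most `n` parts, recorded as a weakly decreasing vector. -/
def IsPartition {n : ℕ} (lam : Fin n → ℕ) : Prop := Antitone lam

/-- `K` is the Koornwinder polynomial `K^{(n)}_λ(·; t₀,t₁,t₂,t₃; q,t)`: a `BC_n`-symmetric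
Laurent polynomial of the form `m_λ` plus a combination of `m_μ` with `μ` strictly dominated
by `λ`, orthogonal to all strictly dominated monomials. -/
def IsKoornwinder (n : ℕ) (t0 t1 t2 t3 q t : ℂ) (lam : Fin n → ℕ)
    (K : (Fin n → ℂ) → ℂ) : Prop :=
  IsBCSymmetric n K ∧
  (∃ c : (Fin n → ℕ) →₀ ℂ,
    (∀ μ ∈ c.support, IsPartition μ ∧ StrictlyDominated (natToZ μ) (natToZ lam)) ∧
    ∀ z : Fin n → ℂ, (∀ i, z i ≠ 0) →
      K z = bcMono n (natToZ lam) z + c.sum fun μ a => a * bcMono n (natToZ μ) z) ∧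
  ∀ μ : Fin n → ℕ, IsPartition μ → StrictlyDominated (natToZ μ) (natToZ lam) →
    koornInner' n t0 t1 t2 t3 q t (fun z => K z * bcMono n (natToZ μ) z) = 0

/-- The principal specialization point `z_i = t^{n-i} a` (1-indexed). -/
def principalPt (n : ℕ) (t a : ℂ) : Fin n → ℂ := fun i => t ^ (n - 1 - (i : ℕ)) * a

/-- The normalized norm `N^{(n)}_λ` of a (candidate) Koornwinder polynomial. -/
def koornNorm (n : ℕ) (t0 t1 t2 t3 q t : ℂ) (K : (Fin n → ℂ) → ℂ) : ℂ :=
  koornInner n t0 t1 t2 t3 q t (fun z => K z * K z) / (K (principalPt n t t0)) ^ 2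

/-- Application of a sign vector: `z_i ↦ z_i⁻¹` where `ε_i` is true. -/
def signFlip {n : ℕ} (ε : Fin n → Bool) (z : Fin n → ℂ) : Fin n → ℂ :=
  fun i => if ε i then (z i)⁻¹ else z i

/-- The cross factor `∏_{i<j} (1 - t w_i w_j)/(1 - w_i w_j)`. -/
def crossFactor {n : ℕ} (t : ℂ) (w : Fin n → ℂ) : ℂ :=
  ∏ i, ∏ j, if i < j then (1 - t * w i * w j) / (1 - w i * w j) else 1

/-- Nondegeneracy conditions on `z` making all the difference-operator denominators nonzero. -/
def ZGood {n : ℕ} (z : Fin n → ℂ) : Prop :=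
  (∀ i, z i ≠ 0) ∧ (∀ i, (z i) ^ 2 ≠ 1) ∧
    ∀ i j : Fin n, i ≠ j → z i * z j ≠ 1 ∧ z i ≠ z j

/-- The lowering difference operator `D^{-(n)}_q(t)`, with `sq` a square root of `q`. -/
def Dminus (n : ℕ) (sq t : ℂ) (f : (Fin n → ℂ) → ℂ) (z : Fin n → ℂ) : ℂ :=
  ∑ ε : Fin n → Bool,
    (∏ i, signFlip ε z i / (1 - (signFlip ε z i) ^ 2)) *
      crossFactor t (signFlip ε z) * f fun i => sq * signFlip ε z i

/-- The difference operator `D^{(n)}_q(t₀,t₁;t)`, with `sq` a square root of `q`. -/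
def Dmid (n : ℕ) (sq t0 t1 t : ℂ) (f : (Fin n → ℂ) → ℂ) (z : Fin n → ℂ) : ℂ :=
  ∑ ε : Fin n → Bool,
    (∏ i, (1 - t0 * signFlip ε z i) * (1 - t1 * signFlip ε z i) / (1 - (signFlip ε z i) ^ 2)) *
      crossFactor t (signFlip ε z) * f fun i => sq * signFlip ε z i

/-- The raising difference operator `D^{+(n)}_q(t₀,t₁,t₂,t₃;t)`, with `sq` a square root of `q`. -/
def Dplus (n : ℕ) (sq t0 t1 t2 t3 t : ℂ) (f : (Fin n → ℂ) → ℂ) (z : Fin n → ℂ) : ℂ :=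
  ∑ ε : Fin n → Bool,
    (∏ i, (1 - t0 * signFlip ε z i) * (1 - t1 * signFlip ε z i) * (1 - t2 * signFlip ε z i) *
        (1 - t3 * signFlip ε z i) / (signFlip ε z i * (1 - (signFlip ε z i) ^ 2))) *
      crossFactor t (signFlip ε z) * f fun i => sq * signFlip ε z i

/-- The Gustafson-type integrand (without prefactor) with parameters `T_0, …, T_{N-1}`. -/
def gustafsonKernel (n N : ℕ) (q : ℂ) (T : Fin N → ℂ) (z : Fin n → ℂ) : ℂ :=
  (∏ i, ∏ j, if i < j then qPochPM (z i) (z j) q * qPochPM ((z i)⁻¹) (z j) q else 1) *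
    ∏ i, (qPoch ((z i) ^ 2) q * qPoch (((z i)⁻¹) ^ 2) q) / ∏ r, qPochPM (T r) (z i) q

/-- The density `κ(z)` of the integral operator `I^{*(n)}(q)`. -/
def IstarWeight (n N : ℕ) (q : ℂ) (T : Fin N → ℂ) (z : Fin n → ℂ) : ℂ :=
  (∏ r, ∏ s, if r < s then qPoch (T r * T s) q else 1) / qPoch (∏ r, T r) q *
    (qPoch q q ^ n / (2 ^ n * (Nat.factorial n : ℂ))) * gustafsonKernel n N q T z

/-- The integral operator `I^{*(n)}(q)` taking a `BC_n`-symmetric polynomial to a function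
of parameters `T_0, …, T_{N-1}` (with `N = 2n+2` in the main case). -/
def Istar (n N : ℕ) (q : ℂ) (f : (Fin n → ℂ) → ℂ) (T : Fin N → ℂ) : ℂ :=
  torusAvg n fun z => f z * IstarWeight n N q T z

/-- The integral operator `I^{+(n)}_t(q)`, with `st` a square root of `t`. -/
def Iplus (n : ℕ) (st q : ℂ) (f : (Fin n → ℂ) → ℂ) (z : Fin (n + 1) → ℂ) : ℂ :=
  Istar n (2 * n + 2) q f fun r =>
    if h : (r : ℕ) < n + 1 then st * z ⟨r, h⟩
    else st * (z ⟨(r : ℕ) - (n + 1), by have := r.isLt; omega⟩)⁻¹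

/-- The integral operator `I^{(n)}_t(t₀,t₁;q)`, with `st` a square root of `t`. -/
def Imid (n : ℕ) (st t0 t1 q : ℂ) (f : (Fin n → ℂ) → ℂ) (z : Fin n → ℂ) : ℂ :=
  Istar n (2 * n + 2) q f fun r =>
    if h0 : (r : ℕ) = 0 then t0
    else if h1 : (r : ℕ) = 1 then t1
    else if h : (r : ℕ) < n + 2 then st * z ⟨(r : ℕ) - 2, by omega⟩
    else st * (z ⟨(r : ℕ) - (n + 2), by have := r.isLt; omega⟩)⁻¹

/-- The integral operator `I^{-(n+1)}_t(t₀,t₁,t₂,t₃;q)` (input `BC_{n+1}`, output `BC_n`),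
with `st` a square root of `t`. -/
def Iminus (n : ℕ) (st t0 t1 t2 t3 q : ℂ) (f : (Fin (n + 1) → ℂ) → ℂ) (z : Fin n → ℂ) : ℂ :=
  Istar (n + 1) (2 * n + 4) q f fun r =>
    if h0 : (r : ℕ) = 0 then t0
    else if h1 : (r : ℕ) = 1 then t1
    else if h2 : (r : ℕ) = 2 then t2
    else if h3 : (r : ℕ) = 3 then t3
    else if h : (r : ℕ) < n + 4 then st * z ⟨(r : ℕ) - 4, by omega⟩
    else st * (z ⟨(r : ℕ) - (n + 4), by have := r.isLt; omega⟩)⁻¹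

/-- The conjugate partition: `conjPart λ i = λ'_i = #{j : λ_j ≥ i}` (for `i ≥ 1`). -/
def conjPart {n : ℕ} (lam : Fin n → ℕ) (i : ℕ) : ℕ :=
  (Finset.univ.filter fun j : Fin n => i ≤ lam j).card

/-- A partition with at most `n` parts viewed as one with at most `n+1` parts. -/
def padPart {n : ℕ} (lam : Fin n → ℕ) : Fin (n + 1) → ℕ :=
  fun i => if h : (i : ℕ) < n then lam ⟨i, h⟩ else 0

/-- The first `n` parts of a partition with at most `n+1` parts. -/
def truncPart {n : ℕ} (lam : Fin (n + 1) → ℕ) : Fin n → ℕ :=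
  fun i => lam i.castSucc

/-- The complementary partition `n^m - λ'` of `λ ⊆ m^n` inside the `m × n` box. -/
def boxCompl {n : ℕ} (m : ℕ) (lam : Fin n → ℕ) : Fin m → ℕ :=
  fun j => n - conjPart lam (m - (j : ℕ))

/-- The interaction kernel `∏_{i,j} (y_j + y_j⁻¹ - z_i - z_i⁻¹)`. -/
def interactionKernel (n m : ℕ) (z : Fin n → ℂ) (y : Fin m → ℂ) : ℂ :=
  ∏ i : Fin n, ∏ j : Fin m, (y j + (y j)⁻¹ - z i - (z i)⁻¹)

/-- The multivariate q-symbol `C⁰_λ(x;q,t)`. -/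
def C0 {n : ℕ} (lam : Fin n → ℕ) (x q t : ℂ) : ℂ :=
  ∏ i : Fin n, qPochFin (t⁻¹ ^ (i : ℕ) * x) q (lam i)

/-- The multivariate q-symbol `C⁻_λ(x;q,t)`. -/
def Cminus {n : ℕ} (lam : Fin n → ℕ) (x q t : ℂ) : ℂ :=
  ∏ i : Fin n, ∏ j : Fin n, if i ≤ j then
      qPochFin (t ^ ((j : ℕ) - (i : ℕ)) * x) q
          (lam i - (if h : (j : ℕ) + 1 < n then lam ⟨(j : ℕ) + 1, h⟩ else 0)) /
        qPochFin (t ^ ((j : ℕ) - (i : ℕ)) * x) q (lam i - lam j)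
    else 1

/-- The multivariate q-symbol `C⁺_λ(x;q,t)`. -/
def Cplus {n : ℕ} (lam : Fin n → ℕ) (x q t : ℂ) : ℂ :=
  ∏ i : Fin n, ∏ j : Fin n, if i ≤ j then
      qPochFin (t⁻¹ ^ ((i : ℕ) + (j : ℕ)) * x) q (lam i + lam j) /
        qPochFin (t⁻¹ ^ ((i : ℕ) + (j : ℕ)) * x) q
          (lam i + (if h : (j : ℕ) + 1 < n then lam ⟨(j : ℕ) + 1, h⟩ else 0))
    else 1

/-- `n(λ) = ∑ (i-1) λ_i`. -/
def nStat {n : ℕ} (lam : Fin n → ℕ) : ℕ := ∑ i : Fin n, (i : ℕ) * lam i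

/-- The symbol `Δ_λ(a | b₁, b₂, b₃, b₄; q, t)`. -/
def DeltaSym {n : ℕ} (lam : Fin n → ℕ) (a b1 b2 b3 b4 q t : ℂ) : ℂ :=
  ((q * a) ^ 2 / (b1 * b2 * b3 * b4)) ^ (∑ i, lam i) *
    (C0 lam b1 q t * C0 lam b2 q t * C0 lam b3 q t * C0 lam b4 q t) /
    (C0 lam (q * a / b1) q t * C0 lam (q * a / b2) q t * C0 lam (q * a / b3) q t *
      C0 lam (q * a / b4) q t) *
  (t ^ (2 * nStat lam) * (t / (q * a)) ^ (∑ i, lam i) *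
      (∏ i : Fin n, qPochFin (t⁻¹ ^ (2 * (i : ℕ)) * (q * a)) q (2 * lam i) *
        qPochFin (t⁻¹ ^ (2 * (i : ℕ) + 1) * (q * a)) q (2 * lam i)) /
    (Cminus lam q q t * Cminus lam t q t * Cplus lam a q t * Cplus lam (q * a / t) q t))

end
/-- `F` equals `lead · m_{λ}` plus a linear combination of monomials `m_μ` with `μ`
strictly dominated by `λ` (as an identity of rational functions). -/
def ExpandsWithLead (n : ℕ) (F : (Fin n → ℂ) → ℂ) (lead : ℂ) (lamZ : Fin n → ℤ) : Prop :=
  ∃ c : (Fin n → ℕ) →₀ ℂ,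
    (∀ μ ∈ c.support, IsPartition μ ∧ StrictlyDominated (natToZ μ) lamZ) ∧
    ∀ z : Fin n → ℂ, ZGood z →
      F z = lead * bcMono n lamZ z + c.sum fun μ a => a * bcMono n (natToZ μ) z

namespace BCTri

/-- The ring of Laurent polynomials in `n` variables. -/
abbrev LR (n : ℕ) := AddMonoidAlgebra ℂ (Fin n → ℤ)

section Basics

variable {n : ℕ}

/-- Laurent monomial with coefficient. -/
noncomputable abbrev mo (α : Fin n → ℤ) (a : ℂ) : LR n := AddMonoidAlgebra.single α a

/-- Algebra homs out of `LR n` agree if they agree on monomials. -/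
theorem lr_hom_ext {A : Type*} [Semiring A] [Algebra ℂ A] {φ ψ : LR n →ₐ[ℂ] A}
    (h : ∀ α, φ (mo α 1) = ψ (mo α 1)) : φ = ψ :=
  AddMonoidAlgebra.algHom_ext h (Subsingleton.elim _ _)

theorem mo_smul (α : Fin n → ℤ) (a : ℂ) : mo α a = a • mo α 1 := by
  simp [mo]

/-- Character of the torus. -/
noncomputable def evMon (z : Fin n → ℂ) (hz : ∀ i, z i ≠ 0) : Multiplicative (Fin n → ℤ) →* ℂ where
  toFun α := ∏ i, z i ^ (Multiplicative.toAdd α) i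
  map_one' := by simp
  map_mul' a b := by
    rw [← Finset.prod_mul_distrib]
    refine Finset.prod_congr rfl fun i _ => ?_
    rw [toAdd_mul, Pi.add_apply, zpow_add₀ (hz i)]

/-- Evaluation. -/
noncomputable def ev (z : Fin n → ℂ) (hz : ∀ i, z i ≠ 0) : LR n →ₐ[ℂ] ℂ :=
  AddMonoidAlgebra.lift ℂ ℂ (Fin n → ℤ) (evMon z hz)

theorem ev_mo (z : Fin n → ℂ) (hz : ∀ i, z i ≠ 0) (α : Fin n → ℤ) (a : ℂ) :
    ev z hz (mo α a) = a * ∏ i, z i ^ α i := by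
  simp [ev, mo, evMon]

theorem ev_apply (z : Fin n → ℂ) (hz : ∀ i, z i ≠ 0) (r : LR n) :
    ev z hz r = r.coeff.sum fun m a => a * ∏ i, z i ^ m i := by
  simp [ev, AddMonoidAlgebra.lift_apply, evMon]

theorem ev_single (z : Fin n → ℂ) (hz : ∀ i, z i ≠ 0) (i : Fin n) (k : ℤ) (a : ℂ) :
    ev z hz (mo (Pi.single i k) a) = a * z i ^ k := by
  rw [ev_mo]
  congr 1
  rw [Finset.prod_eq_single i]
  · simp
  · intro j _ hj; simp [hj]
  · simp

theorem evMon_injective {α β : Fin n → ℤ}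
    (h : ∀ z (hz : ∀ i, z i ≠ 0), ev z hz (mo α 1) = ev z hz (mo β 1)) : α = β := by
  funext i
  have := h (Function.update 1 i 2) (by
    intro j; by_cases hj : j = i <;> simp [hj])
  rw [ev_mo, ev_mo, one_mul, one_mul, Finset.prod_eq_single i, Finset.prod_eq_single i] at this
  · simp at this
    have h2 : ((2:ℝ):ℂ) ^ α i = ((2:ℝ):ℂ) ^ β i := by simpa using this
    have h3 : (2:ℝ) ^ α i = (2:ℝ) ^ β i := by exact_mod_cast h2
    exact zpow_right_injective₀ (by norm_num) (by norm_num) h3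
  all_goals simp +contextual

/-- Evaluation as a character of the unit torus. -/
noncomputable def chr (α : Fin n → ℤ) : (Fin n → ℂˣ) →* ℂ where
  toFun u := ∏ i, (u i : ℂ) ^ α i
  map_one' := by simp
  map_mul' a b := by
    rw [← Finset.prod_mul_distrib]
    refine Finset.prod_congr rfl fun i _ => ?_
    simp [mul_zpow]

theorem ev_inj {r s : LR n} (h : ∀ z hz, ev z hz r = ev z hz s) : r = s := by
  rw [← sub_eq_zero]
  set d := r - s with hd
  have h0 : ∀ z hz, ev z hz d = 0 := by intro z hz; rw [hd, map_sub, h, sub_self]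
  have hinj : Function.Injective (chr (n := n)) := by
    intro α β hab
    apply evMon_injective
    intro z hz
    have := DFunLike.congr_fun hab (fun i => Units.mk0 (z i) (hz i))
    simpa [ev_mo, chr] using this
  have li := (linearIndependent_monoidHom (Fin n → ℂˣ) ℂ).comp _ hinj
  rw [linearIndependent_iff] at li
  have := li d.coeff (by
    funext u
    have := h0 (fun i => (u i : ℂ)) (fun i => (u i).ne_zero)
    rw [ev_apply] at this
    rw [Finsupp.linearCombination_apply, Finsupp.sum, Finset.sum_apply]
    simpa [chr, Finsupp.sum] using this)
  exact AddMonoidAlgebra.ext (by simpa using this)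

/-- Sign flips on exponents. -/
def flipM (ε : Fin n → Bool) : (Fin n → ℤ) →+ (Fin n → ℤ) where
  toFun α i := if ε i then -α i else α i
  map_zero' := by funext i; simp
  map_add' a b := by funext i; simp only [Pi.add_apply]; split_ifs <;> ring

/-- Permutations on exponents. -/
def permM (σ : Equiv.Perm (Fin n)) : (Fin n → ℤ) →+ (Fin n → ℤ) where
  toFun α := α ∘ σ
  map_zero' := rfl
  map_add' _ _ := rfl

theorem flipM_apply (ε : Fin n → Bool) (α : Fin n → ℤ) (i : Fin n) :
    flipM ε α i = if ε i then -α i else α i := rfl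

theorem flipM_flipM (ε : Fin n → Bool) (α : Fin n → ℤ) : flipM ε (flipM ε α) = α := by
  funext i; simp only [flipM_apply]; split_ifs <;> simp

theorem permM_apply (σ : Equiv.Perm (Fin n)) (α : Fin n → ℤ) : permM σ α = α ∘ σ := rfl

theorem flipM_single (ε : Fin n → Bool) (i : Fin n) (k : ℤ) :
    flipM ε (Pi.single i k) = Pi.single i (if ε i then -k else k) := by
  funext j
  rw [flipM_apply]
  by_cases h : j = i
  · subst h; simp
  · simp [h]

theorem permM_single (σ : Equiv.Perm (Fin n)) (i : Fin n) (k : ℤ) :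
    permM σ (Pi.single i k) = Pi.single (σ⁻¹ i) k := by
  funext j
  rw [permM_apply, Function.comp]
  by_cases h : j = σ⁻¹ i
  · subst h; simp
  · have : σ j ≠ i := by rintro rfl; simp at h
    rw [Pi.single_eq_of_ne h, Pi.single_eq_of_ne this]

/-- Sign flips on Laurent polynomials. -/
noncomputable def FL (ε : Fin n → Bool) : LR n →ₐ[ℂ] LR n :=
  AddMonoidAlgebra.mapDomainAlgHom ℂ ℂ (flipM ε)

/-- Permutations on Laurent polynomials. -/
noncomputable def PE (σ : Equiv.Perm (Fin n)) : LR n →ₐ[ℂ] LR n :=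
  AddMonoidAlgebra.mapDomainAlgHom ℂ ℂ (permM σ)

theorem FL_mo (ε : Fin n → Bool) (α : Fin n → ℤ) (a : ℂ) : FL ε (mo α a) = mo (flipM ε α) a := by
  simp [FL, mo]

theorem PE_mo (σ : Equiv.Perm (Fin n)) (α : Fin n → ℤ) (a : ℂ) :
    PE σ (mo α a) = mo (permM σ α) a := by
  simp [PE, mo]

theorem flipM_inj (ε : Fin n → Bool) : Function.Injective (flipM ε) :=
  Function.LeftInverse.injective (flipM_flipM ε)

theorem permM_inj (σ : Equiv.Perm (Fin n)) : Function.Injective (permM σ) := by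
  intro a b h
  funext i
  have := congrFun h (σ⁻¹ i)
  simpa [permM_apply] using this

theorem FL_coeff (ε : Fin n → Bool) (r : LR n) (α : Fin n → ℤ) :
    (FL ε r).coeff (flipM ε α) = r.coeff α := by
  simp only [FL, AddMonoidAlgebra.mapDomainAlgHom_apply, AddMonoidAlgebra.coeff_mapDomain]
  exact Finsupp.mapDomain_apply (flipM_inj ε) _ _

theorem PE_coeff (σ : Equiv.Perm (Fin n)) (r : LR n) (α : Fin n → ℤ) :
    (PE σ r).coeff (α ∘ σ) = r.coeff α := by
  simp only [PE, AddMonoidAlgebra.mapDomainAlgHom_apply, AddMonoidAlgebra.coeff_mapDomain]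
  exact Finsupp.mapDomain_apply (permM_inj σ) _ α

theorem signFlip_ne (ε : Fin n → Bool) {z : Fin n → ℂ} (hz : ∀ i, z i ≠ 0) (i : Fin n) :
    signFlip ε z i ≠ 0 := by
  unfold signFlip; split_ifs <;> simp [hz i]

theorem ev_FL (ε : Fin n → Bool) (z : Fin n → ℂ) (hz : ∀ i, z i ≠ 0) (r : LR n) :
    ev z hz (FL ε r) = ev (signFlip ε z) (signFlip_ne ε hz) r := by
  have : (ev z hz).comp (FL ε) = ev (signFlip ε z) (signFlip_ne ε hz) := by
    apply lr_hom_ext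
    intro α
    rw [AlgHom.comp_apply, FL_mo, ev_mo, ev_mo]
    congr 1
    refine Finset.prod_congr rfl fun i _ => ?_
    rw [flipM_apply, signFlip]
    split_ifs <;> simp
  exact DFunLike.congr_fun this r

theorem ev_PE (σ : Equiv.Perm (Fin n)) (z : Fin n → ℂ) (hz : ∀ i, z i ≠ 0) (r : LR n) :
    ev z hz (PE σ r) = ev (z ∘ σ.symm) (fun i => hz _) r := by
  have : (ev z hz).comp (PE σ) = ev (z ∘ σ.symm) (fun i => hz _) := by
    apply lr_hom_ext
    intro α
    rw [AlgHom.comp_apply, PE_mo, ev_mo, ev_mo]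
    congr 1
    rw [← Equiv.prod_comp σ (fun i => (z ∘ σ.symm) i ^ α i)]
    refine Finset.prod_congr rfl fun i _ => ?_
    simp [permM_apply]
  exact DFunLike.congr_fun this r

/-- Rescaling homomorphism. -/
noncomputable def sclM (s : ℂ) (hs : s ≠ 0) : Multiplicative (Fin n → ℤ) →* LR n where
  toFun α := mo (Multiplicative.toAdd α) (∏ i, s ^ (Multiplicative.toAdd α) i)
  map_one' := by simp [mo, AddMonoidAlgebra.one_def]
  map_mul' a b := by
    simp only [mo, AddMonoidAlgebra.single_mul_single, toAdd_mul, ← Finset.prod_mul_distrib]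
    congr 1
    refine Finset.prod_congr rfl fun i _ => ?_
    rw [Pi.add_apply, zpow_add₀ hs]

/-- Rescaling all variables. -/
noncomputable def SC (s : ℂ) (hs : s ≠ 0) : LR n →ₐ[ℂ] LR n :=
  AddMonoidAlgebra.lift ℂ (LR n) (Fin n → ℤ) (sclM s hs)

theorem SC_mo (s : ℂ) (hs : s ≠ 0) (α : Fin n → ℤ) (a : ℂ) :
    SC s hs (mo α a) = mo α (a * ∏ i, s ^ α i) := by
  simp [SC, mo, sclM]

theorem ev_SC (s : ℂ) (hs : s ≠ 0) (z : Fin n → ℂ) (hz : ∀ i, z i ≠ 0) (r : LR n) :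
    ev z hz (SC s hs r) = ev (fun i => s * z i) (fun i => mul_ne_zero hs (hz i)) r := by
  have : (ev z hz).comp (SC s hs) = ev (fun i => s * z i) (fun i => mul_ne_zero hs (hz i)) := by
    apply lr_hom_ext
    intro α
    rw [AlgHom.comp_apply, SC_mo, ev_mo, ev_mo, one_mul, one_mul, ← Finset.prod_mul_distrib]
    refine Finset.prod_congr rfl fun i _ => ?_
    rw [mul_zpow]
  exact DFunLike.congr_fun this r

theorem PE_SC (σ : Equiv.Perm (Fin n)) (s : ℂ) (hs : s ≠ 0) (r : LR n) :
    PE σ (SC s hs r) = SC s hs (PE σ r) := by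
  have : (PE σ).comp (SC s hs) = (SC s hs).comp (PE (n := n) σ) := by
    apply lr_hom_ext
    intro α
    simp only [AlgHom.comp_apply, SC_mo, PE_mo]
    congr 2
    exact (Equiv.prod_comp σ (fun i => s ^ α i)).symm
  exact DFunLike.congr_fun this r

theorem PE_FL (σ : Equiv.Perm (Fin n)) (ε : Fin n → Bool) (r : LR n) :
    PE σ (FL ε r) = FL (ε ∘ σ) (PE σ r) := by
  have : (PE σ).comp (FL ε) = (FL (ε ∘ σ)).comp (PE (n := n) σ) := by
    apply lr_hom_ext
    intro α
    simp only [AlgHom.comp_apply, FL_mo, PE_mo]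
    congr 1
  exact DFunLike.congr_fun this r

theorem FL_FL (ε δ : Fin n → Bool) (r : LR n) :
    FL δ (FL ε r) = FL (fun i => xor (δ i) (ε i)) r := by
  have : (FL δ).comp (FL ε) = (FL (n := n) (fun i => xor (δ i) (ε i))) := by
    apply lr_hom_ext
    intro α
    simp only [AlgHom.comp_apply, FL_mo]
    congr 1
    funext i
    simp only [flipM_apply]
    cases δ i <;> cases ε i <;> simp
  exact DFunLike.congr_fun this r

end Basics

end BCTri

namespace BCTri

section LeadSec

variable {n : ℕ}

/-- Partial sums. -/
def ps (k : ℕ) : (Fin n → ℤ) →+ ℤ where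
  toFun α := ∑ i ∈ Finset.univ.filter (fun i : Fin n => (i : ℕ) < k), α i
  map_zero' := by simp
  map_add' a b := by simp [Finset.sum_add_distrib]

theorem dom_iff (κ α : Fin n → ℤ) : Dominates κ α ↔ ∀ k, ps k α ≤ ps k κ := Iff.rfl

theorem ps_succ (α : Fin n → ℤ) (i : Fin n) : ps ((i : ℕ) + 1) α = ps (i : ℕ) α + α i := by
  have : Finset.univ.filter (fun j : Fin n => (j : ℕ) < (i : ℕ) + 1)
      = insert i (Finset.univ.filter (fun j : Fin n => (j : ℕ) < (i : ℕ))) := by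
    ext j
    simp only [Finset.mem_filter, Finset.mem_univ, true_and, Finset.mem_insert, Fin.ext_iff]
    omega
  simp only [ps, AddMonoidHom.coe_mk, ZeroHom.coe_mk]
  rw [this, Finset.sum_insert (by simp), add_comm]

theorem ps_inj {α β : Fin n → ℤ} (h : ∀ k, ps k α = ps k β) : α = β := by
  funext i
  have h1 := ps_succ α i
  have h2 := ps_succ β i
  have h3 := h (i + 1)
  have h4 := h i
  omega

theorem ps_single (k : ℕ) (i : Fin n) (a : ℤ) :
    ps k (Pi.single i a) = if (i : ℕ) < k then a else 0 := by
  simp only [ps, AddMonoidHom.coe_mk, ZeroHom.coe_mk]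
  rw [Finset.sum_filter]
  rw [Finset.sum_eq_single i]
  · simp
  · intro j _ hj; simp [hj]
  · simp

/-- `r` has all exponents dominated by `κ`, and coefficient `c` at `κ`. -/
def Lead (r : LR n) (κ : Fin n → ℤ) (c : ℂ) : Prop :=
  (∀ α, r.coeff α ≠ 0 → Dominates κ α) ∧ r.coeff κ = c

theorem dom_unique {κ κ' α β : Fin n → ℤ} (h1 : Dominates κ α) (h2 : Dominates κ' β)
    (h : α + β = κ + κ') : α = κ ∧ β = κ' := by
  rw [dom_iff] at h1 h2
  constructor
  all_goals
    apply ps_inj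
    intro k
    have := congrArg (ps k) h
    rw [map_add, map_add] at this
    have := h1 k
    have := h2 k
    omega

theorem mul_coeff_ne {r s : LR n} {γ : Fin n → ℤ} (h : (r * s).coeff γ ≠ 0) :
    ∃ α β, r.coeff α ≠ 0 ∧ s.coeff β ≠ 0 ∧ α + β = γ := by
  classical
  by_contra hcon
  push Not at hcon
  apply h
  rw [AddMonoidAlgebra.coeff_mul]
  simp only [Finsupp.sum]
  refine Finset.sum_eq_zero fun α hα => Finset.sum_eq_zero fun β hβ => ?_
  have := hcon α β (by simpa using hα) (by simpa using hβ)
  simp [this]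

theorem Lead.mul {r s : LR n} {κ κ' : Fin n → ℤ} {c c' : ℂ} (hr : Lead r κ c) (hs : Lead s κ' c') :
    Lead (r * s) (κ + κ') (c * c') := by
  constructor
  · intro γ hγ
    obtain ⟨α, β, ha, hb, rfl⟩ := mul_coeff_ne hγ
    have h1 := hr.1 α ha
    have h2 := hs.1 β hb
    rw [dom_iff] at *
    intro k
    rw [map_add, map_add]
    exact add_le_add (h1 k) (h2 k)
  · rw [AddMonoidAlgebra.coeff_mul_add_of_uniqueAdd, hr.2, hs.2]
    intro α β ha hb h
    exact dom_unique (hr.1 α (by simpa using ha)) (hs.1 β (by simpa using hb)) h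

theorem Lead.one : Lead (1 : LR n) 0 1 := by
  constructor
  · intro α h
    rw [AddMonoidAlgebra.one_def, AddMonoidAlgebra.coeff_single, Finsupp.single_apply] at h
    have : α = 0 := by by_contra h'; exact h (if_neg (fun h => h' h.symm))
    subst this
    exact fun k => le_rfl
  · simp

theorem Lead.zero (κ : Fin n → ℤ) : Lead (0 : LR n) κ 0 := by
  constructor
  · intro α h; simp at h
  · simp

theorem Lead.add {r s : LR n} {κ : Fin n → ℤ} {c c' : ℂ} (hr : Lead r κ c) (hs : Lead s κ c') :
    Lead (r + s) κ (c + c') := by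
  constructor
  · intro α h
    by_cases h1 : r.coeff α = 0
    · apply hs.1
      intro h2; apply h; simp [h1, h2]
    · exact hr.1 α h1
  · simp [hr.2, hs.2]

theorem Lead.smul {r : LR n} {κ : Fin n → ℤ} {c : ℂ} (a : ℂ) (hr : Lead r κ c) :
    Lead (a • r) κ (a * c) := by
  constructor
  · intro α h
    apply hr.1
    intro h2; apply h; simp [h2]
  · simp [hr.2]

theorem Lead.sum {ι : Type*} (S : Finset ι) {r : ι → LR n} {κ : Fin n → ℤ} {c : ι → ℂ}
    (h : ∀ i ∈ S, Lead (r i) κ (c i)) : Lead (∑ i ∈ S, r i) κ (∑ i ∈ S, c i) := by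
  classical
  induction S using Finset.induction_on with
  | empty => simpa using Lead.zero κ
  | insert a S ha ih =>
    rw [Finset.sum_insert ha, Finset.sum_insert ha]
    exact (h a (by simp)).add (ih fun i hi => h i (by simp [hi]))

theorem Lead.prod {ι : Type*} (S : Finset ι) {r : ι → LR n} {κ : ι → Fin n → ℤ} {c : ι → ℂ}
    (h : ∀ i ∈ S, Lead (r i) (κ i) (c i)) :
    Lead (∏ i ∈ S, r i) (∑ i ∈ S, κ i) (∏ i ∈ S, c i) := by
  classical
  induction S using Finset.induction_on with
  | empty => simpa using Lead.one
  | insert a S ha ih =>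
    rw [Finset.prod_insert ha, Finset.prod_insert ha, Finset.sum_insert ha]
    exact (h a (by simp)).mul (ih fun i hi => h i (by simp [hi]))

theorem Lead.mo_self (κ : Fin n → ℤ) (a : ℂ) : Lead (mo κ a) κ a := by
  constructor
  · intro α h
    rw [AddMonoidAlgebra.coeff_single, Finsupp.single_apply] at h
    have : κ = α := by by_contra h'; exact h (if_neg h')
    subst this
    exact fun k => le_rfl
  · simp

theorem Lead.mo_of_ne {κ α : Fin n → ℤ} (hd : Dominates κ α) (hne : α ≠ κ) (a : ℂ) :
    Lead (mo α a) κ 0 := by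
  constructor
  · intro β h
    rw [AddMonoidAlgebra.coeff_single, Finsupp.single_apply] at h
    have : α = β := by by_contra h'; exact h (if_neg h')
    subst this
    exact hd
  · simp [hne]

/-- Cancel a factor with leading coefficient one. -/
theorem Lead.cancel {r s : LR n} {κ κ' : Fin n → ℤ} {c : ℂ} (hr : Lead r κ 1)
    (hrs : Lead (r * s) (κ + κ') c) : Lead s κ' c := by
  have hdom : ∀ α, s.coeff α ≠ 0 → Dominates κ' α := by
    intro β hβ
    rw [dom_iff]
    intro k
    classical
    have hrne : r.coeff.support.Nonempty := ⟨κ, by simp [hr.2]⟩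
    have hsne : s.coeff.support.Nonempty := ⟨β, by simpa using hβ⟩
    obtain ⟨a, ha, hamax⟩ := Finset.exists_max_image _ (ps k) hrne
    obtain ⟨b, hb, hbmax⟩ := Finset.exists_max_image _ (ps k) hsne
    obtain ⟨a0, ha0, b0, hb0, hu⟩ := UniqueSums.uniqueAdd_of_nonempty
      (A := r.coeff.support.filter (fun x => ps k x = ps k a))
      (B := s.coeff.support.filter (fun x => ps k x = ps k b))
      ⟨a, by simpa using ha⟩ ⟨b, by simpa using hb⟩
    rw [Finset.mem_filter] at ha0 hb0
    have hu' : UniqueAdd r.coeff.support s.coeff.support a0 b0 := by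
      intro x y hx hy hxy
      have h1 := hamax x hx
      have h2 := hbmax y hy
      have h3 := congrArg (ps k) hxy
      rw [map_add, map_add] at h3
      refine hu ?_ ?_ hxy
      · rw [Finset.mem_filter]; exact ⟨hx, by omega⟩
      · rw [Finset.mem_filter]; exact ⟨hy, by omega⟩
    have h4 := AddMonoidAlgebra.coeff_mul_add_of_uniqueAdd hu'
    have h5 : (r * s).coeff (a0 + b0) ≠ 0 := by
      rw [h4]
      exact mul_ne_zero (by simpa using ha0.1) (by simpa using hb0.1)
    have h6 := hrs.1 _ h5
    rw [dom_iff] at h6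
    have h7 := h6 k
    rw [map_add, map_add] at h7
    have h8 := hamax κ (by simp [hr.2])
    have h9 := hbmax β (by simpa using hβ)
    omega
  refine ⟨hdom, ?_⟩
  have := (hr.mul (⟨hdom, rfl⟩ : Lead s κ' (s.coeff κ'))).2
  rw [hrs.2, one_mul] at this
  exact this.symm

end LeadSec

end BCTri

namespace BCTri

section NewtonSec

open Polynomial

variable {R : Type*} [CommRing R]

/-- Iterated quotients in Newton interpolation. -/
noncomputable def nq (y : ℕ → R) (p : R[X]) : ℕ → R[X]
  | 0 => p
  | m + 1 => nq y p m /ₘ (X - C (y m))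

theorem newton_expand (y : ℕ → R) (p : R[X]) (a : R) (N : ℕ) :
    p.eval a = ∑ m ∈ Finset.range N, (∏ l ∈ Finset.range m, (a - y l)) * (nq y p m).eval (y m)
      + (∏ l ∈ Finset.range N, (a - y l)) * (nq y p N).eval a := by
  induction N with
  | zero => simp [nq]
  | succ N ih =>
    rw [ih, Finset.sum_range_succ, Finset.prod_range_succ, add_assoc]
    congr 1
    have h : nq y p N = C ((nq y p N).eval (y N)) + (X - C (y N)) * nq y p (N + 1) := by
      conv_lhs => rw [← Polynomial.modByMonic_add_div (nq y p N) (X - C (y N))]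
      rw [Polynomial.modByMonic_X_sub_C_eq_C_eval]
      rfl
    have h2 := congrArg (Polynomial.eval a) h
    simp only [eval_add, eval_C, eval_mul, eval_sub, eval_X] at h2
    rw [h2]
    ring

theorem vandermonde_dvd {n : ℕ} (x : Fin n → R) (Q : Fin n → R[X]) :
    (∏ i, ∏ j ∈ Finset.Ioi i, (x j - x i)) ∣
      (Matrix.of fun i j => (Q j).eval (x i)).det := by
  let y : ℕ → R := fun m => if h : m < n then x ⟨m, h⟩ else 0
  have hy : ∀ i : Fin n, y i = x i := fun i => by simp [y]
  let L : Matrix (Fin n) (Fin n) R :=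
    Matrix.of fun i m => ∏ l ∈ Finset.range (m : ℕ), (x i - y l)
  let E : Matrix (Fin n) (Fin n) R := Matrix.of fun m j => (nq y (Q j) m).eval (y m)
  have hLE : (Matrix.of fun i j => (Q j).eval (x i)) = L * E := by
    ext i j
    rw [Matrix.mul_apply, Matrix.of_apply, newton_expand y (Q j) (x i) n]
    rw [Finset.prod_eq_zero (i := (i : ℕ)) (by simp) (by rw [hy]; ring), zero_mul, add_zero]
    rw [← Fin.sum_univ_eq_sum_range
      (fun m => (∏ l ∈ Finset.range m, (x i - y l)) * (nq y (Q j) m).eval (y m)) n]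
    rfl
  rw [hLE, Matrix.det_mul]
  have hL : L.det = ∏ i, ∏ j ∈ Finset.Ioi i, (x j - x i) := by
    rw [Matrix.det_of_isLowerTriangular]
    · rw [Finset.prod_comm' (t' := Finset.univ) (s' := fun j => Finset.Iio j)]
      · refine Finset.prod_congr rfl fun m _ => ?_
        simp only [L, Matrix.of_apply]
        have hmap : Finset.range (m : ℕ) = (Finset.Iio m).map Fin.valEmbedding := by
          rw [Fin.map_valEmbedding_Iio, Nat.Iio_eq_range]
        rw [hmap, Finset.prod_map]
        refine Finset.prod_congr rfl fun l _ => ?_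
        rw [Fin.valEmbedding_apply, hy]
      · simp
    · intro i m him
      simp only [L, Matrix.of_apply]
      refine Finset.prod_eq_zero (i := (i : ℕ)) ?_ (by rw [hy]; ring)
      simpa using him
  rw [hL]
  exact dvd_mul_right _ _

end NewtonSec

section DivSec

variable {n : ℕ}

theorem mo_single_mul (i : Fin n) (k l : ℤ) :
    mo (Pi.single i k) 1 * mo (Pi.single i l) 1 = mo (Pi.single i (k + l)) 1 := by
  simp only [mo, AddMonoidAlgebra.single_mul_single, mul_one, Pi.single_add]

/-- The variable sum `z_i + z_i⁻¹`. -/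
noncomputable def xx (i : Fin n) : LR n := mo (Pi.single i 1) 1 + mo (Pi.single i (-1)) 1

/-- The difference `z_i - z_i⁻¹`. -/
noncomputable def dd (i : Fin n) : LR n := mo (Pi.single i 1) 1 - mo (Pi.single i (-1)) 1

/-- The difference `z_i^{-k} - z_i^k`. -/
noncomputable def VV (i : Fin n) (k : ℤ) : LR n :=
  mo (Pi.single i (-k)) 1 - mo (Pi.single i k) 1

theorem VV_rec (i : Fin n) (k : ℤ) : VV i (k + 1) = xx i * VV i k - VV i (k - 1) := by
  simp only [VV, xx, mul_sub, add_mul, mo_single_mul]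
  rw [show (1 : ℤ) + -k = -(k - 1) by ring, show (1 : ℤ) + k = k + 1 by ring,
    show (-1 : ℤ) + -k = -(k + 1) by ring, show (-1 : ℤ) + k = k - 1 by ring]
  ring

theorem VV_cheb (i : Fin n) (k : ℤ) :
    VV i k = dd i * (-(Polynomial.Chebyshev.S (LR n) (k - 1))).eval (xx i) := by
  have key : ∀ k : ℤ, (VV i k = dd i * (-(Polynomial.Chebyshev.S (LR n) (k - 1))).eval (xx i)) ∧
      (VV i (k + 1) = dd i * (-(Polynomial.Chebyshev.S (LR n) (k + 1 - 1))).eval (xx i)) := by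
    intro k
    induction k using Int.induction_on with
    | zero => simp [VV, dd]
    | succ k ih =>
      refine ⟨ih.2, ?_⟩
      rw [VV_rec, show (k : ℤ) + 1 - 1 = k by ring, ih.1, ih.2]
      rw [show (k : ℤ) + 1 + 1 - 1 = (k - 1) + 2 by ring, Polynomial.Chebyshev.S_add_two,
        show (k : ℤ) - 1 + 1 = k by ring, show (k : ℤ) + 1 - 1 = k by ring]
      simp only [Polynomial.eval_neg, Polynomial.eval_sub, Polynomial.eval_mul, Polynomial.eval_X]
      ring
    | pred k ih =>
      have h := VV_rec i (-(k : ℤ))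
      have h1 := ih.1
      have h2 := ih.2
      refine ⟨?_, by rw [show -(k : ℤ) - 1 + 1 = -k by ring]; exact ih.1⟩
      have h3 : VV i (-(k : ℤ) - 1) = xx i * VV i (-k) - VV i (-k + 1) := by rw [h]; ring
      have h4 := Polynomial.Chebyshev.S_sub_one (LR n) (-(k : ℤ) - 1)
      rw [show -(k : ℤ) - 1 + 1 = -k by ring] at h4
      rw [h3, h1, h2, h4, show -(k : ℤ) + 1 - 1 = -k by ring]
      simp only [Polynomial.eval_neg, Polynomial.eval_sub, Polynomial.eval_mul, Polynomial.eval_X]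
      ring
  exact (key k).1

/-- The type C Weyl denominator. -/
noncomputable def DN (n : ℕ) : LR n :=
  (∏ i, dd i) * ∏ i : Fin n, ∏ j ∈ Finset.Ioi i, (xx i - xx j)

/-- Sign attached to a flip. -/
def sg (ε : Fin n → Bool) : ℂ := ∏ i, (if ε i then 1 else -1)

/-- Alternating sum over flips. -/
noncomputable def AL (r : LR n) : LR n := ∑ ε : Fin n → Bool, sg ε • FL ε r

theorem AL_add (r s : LR n) : AL (r + s) = AL r + AL s := by
  simp [AL, Finset.sum_add_distrib]

theorem AL_zero : AL (0 : LR n) = 0 := by simp [AL]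

theorem AL_mo (κ : Fin n → ℤ) (a : ℂ) : AL (mo κ a) = a • ∏ i, VV i (κ i) := by
  have h1 : ∀ i : Fin n, VV i (κ i) = ∑ b : Bool,
      mo (Pi.single i (if b then -κ i else κ i)) (if b then (1 : ℂ) else -1) := by
    intro i
    simp [VV, mo, AddMonoidAlgebra.single_neg, sub_eq_add_neg]
  simp_rw [h1]
  rw [Fintype.prod_sum, Finset.smul_sum, AL]
  refine Finset.sum_congr rfl fun ε _ => ?_
  rw [FL_mo]
  simp only [mo]
  rw [AddMonoidAlgebra.prod_single, AddMonoidAlgebra.smul_single, AddMonoidAlgebra.smul_single]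
  congr 1
  · rw [Finset.univ_sum_single]
    rfl
  · simp only [sg, smul_eq_mul]; ring

theorem DN_dvd_det (κ : Fin n → ℤ) : DN n ∣ (Matrix.of fun i j => VV i (κ j)).det := by
  have h : (Matrix.of fun i j => VV i (κ j)) = Matrix.of fun i j : Fin n => dd i *
      (Matrix.of fun i j : Fin n =>
        (-(Polynomial.Chebyshev.S (LR n) (κ j - 1))).eval (xx i)) i j := by
    ext1 i j
    simp only [Matrix.of_apply]
    exact VV_cheb i (κ j)
  rw [h, Matrix.det_mul_column]
  apply mul_dvd_mul_left
  have h2 := vandermonde_dvd (xx (n := n)) (fun j => -(Polynomial.Chebyshev.S (LR n) (κ j - 1)))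
  refine dvd_trans ?_ h2
  apply Finset.prod_dvd_prod_of_dvd
  intro i _
  apply Finset.prod_dvd_prod_of_dvd
  intro j _
  rw [← neg_sub]
  exact (neg_dvd.mpr dvd_rfl)

theorem DN_dvd_alt (r : LR n) :
    DN n ∣ ∑ σ : Equiv.Perm (Fin n), (Equiv.Perm.sign σ : ℤ) • AL (PE σ r) := by
  induction r using AddMonoidAlgebra.induction_linear with
  | zero => simp [AL_zero]
  | add x y hx hy =>
    simp only [map_add, AL_add, smul_add, Finset.sum_add_distrib]
    exact dvd_add hx hy
  | single κ a =>
    have h := DN_dvd_det κ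
    rw [← Matrix.det_transpose, Matrix.det_apply] at h
    have : ∑ σ : Equiv.Perm (Fin n), (Equiv.Perm.sign σ : ℤ) • AL (PE σ (mo κ a)) =
        a • ∑ σ : Equiv.Perm (Fin n), Equiv.Perm.sign σ • ∏ i,
          (Matrix.of fun i j => VV i (κ j)).transpose (σ i) i := by
      rw [Finset.smul_sum]
      refine Finset.sum_congr rfl fun σ _ => ?_
      rw [PE_mo, AL_mo, smul_comm]
      rfl
    rw [this]
    exact Dvd.dvd.trans h (Dvd.intro (algebraMap ℂ (LR n) a) (by rw [mul_comm, Algebra.smul_def]))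

theorem DN_dvd {G : LR n} (hG : ∀ σ, PE σ G = (Equiv.Perm.sign σ : ℤ) • G) : DN n ∣ AL G := by
  have h := DN_dvd_alt G
  have h2 : ∀ σ : Equiv.Perm (Fin n), (Equiv.Perm.sign σ : ℤ) • AL (PE σ G) = AL G := by
    intro σ
    rw [hG]
    rcases Int.units_eq_one_or (Equiv.Perm.sign σ) with h | h <;> rw [h] <;>
      simp [AL]
  simp only [h2, Finset.sum_const, Finset.card_univ] at h
  rw [← Nat.cast_smul_eq_nsmul ℂ] at h
  obtain ⟨g, hg⟩ := h
  refine ⟨((Fintype.card (Equiv.Perm (Fin n)) : ℂ)⁻¹) • g, ?_⟩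
  rw [mul_smul_comm, ← hg, smul_smul, inv_mul_cancel₀, one_smul]
  exact_mod_cast Fintype.card_ne_zero

end DivSec

end BCTri

namespace BCTri

section OpSec

variable {n : ℕ}

/-- One variable factor. -/
noncomputable def pp (d : ℤ) (a : ℤ → ℂ) (i : Fin n) : LR n :=
  ∑ k ∈ Finset.Icc (-d) d, mo (Pi.single i k) (a k)

/-- Pair factor. -/
noncomputable def pr (t : ℂ) (i j : Fin n) : LR n :=
  mo (Pi.single i (-1)) 1 - mo (Pi.single j (-1)) 1 - mo (Pi.single j 1) t + mo (Pi.single i 1) t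

/-- The numerator before alternation. -/
noncomputable def GG (d : ℤ) (a : ℤ → ℂ) (t s : ℂ) (hs : s ≠ 0) (f : LR n) : LR n :=
  (∏ i, pp d a i) * (∏ i, ∏ j ∈ Finset.Ioi i, pr t i j) * SC s hs f

theorem PE_pp (σ : Equiv.Perm (Fin n)) (d : ℤ) (a : ℤ → ℂ) (i : Fin n) :
    PE σ (pp d a i) = pp d a (σ⁻¹ i) := by
  simp only [pp, map_sum, PE_mo, permM_single]

theorem PE_pr (σ : Equiv.Perm (Fin n)) (t : ℂ) (i j : Fin n) :
    PE σ (pr t i j) = pr t (σ⁻¹ i) (σ⁻¹ j) := by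
  simp only [pr, map_add, map_sub, PE_mo, permM_single]

theorem PE_xx (σ : Equiv.Perm (Fin n)) (i : Fin n) : PE σ (xx i) = xx (σ⁻¹ i) := by
  simp only [xx, map_add, PE_mo, permM_single]

theorem PE_dd (σ : Equiv.Perm (Fin n)) (i : Fin n) : PE σ (dd i) = dd (σ⁻¹ i) := by
  simp only [dd, map_sub, PE_mo, permM_single]

theorem PE_GG (d : ℤ) (a : ℤ → ℂ) (t s : ℂ) (hs : s ≠ 0) (f : LR n)
    (σ : Equiv.Perm (Fin n)) (hf : PE σ f = f) :
    PE σ (GG d a t s hs f) = (Equiv.Perm.sign σ : ℤ) • GG d a t s hs f := by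
  simp only [GG, map_mul, map_prod, PE_pp, PE_pr, PE_SC, hf]
  rw [Equiv.prod_comp σ⁻¹ (fun i => pp d a i)]
  rw [Equiv.Perm.prod_Ioi_comp_eq_sign_mul_prod σ⁻¹ (f := fun i j => pr t i j) (by
    intro i j; simp only [pr]; ring)]
  rw [Equiv.Perm.sign_inv, zsmul_eq_mul]
  ring

theorem PE_DN (σ : Equiv.Perm (Fin n)) :
    PE σ (DN n) = (Equiv.Perm.sign σ : ℤ) • DN n := by
  simp only [DN, map_mul, map_prod, map_sub, PE_dd, PE_xx]
  rw [Equiv.prod_comp σ⁻¹ (fun i => dd i)]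
  rw [Equiv.Perm.prod_Ioi_comp_eq_sign_mul_prod σ⁻¹ (f := fun i j => xx i - xx j) (by
    intro i j; ring)]
  rw [Equiv.Perm.sign_inv, zsmul_eq_mul]
  ring

theorem FL_xx (δ : Fin n → Bool) (i : Fin n) : FL δ (xx i) = xx i := by
  simp only [xx, map_add, FL_mo, flipM_single]
  cases δ i <;> simp [add_comm]

theorem FL_dd (δ : Fin n → Bool) (i : Fin n) :
    FL δ (dd i) = (if δ i then (-1 : ℂ) else 1) • dd i := by
  simp only [dd, map_sub, FL_mo, flipM_single]
  cases δ i <;> simp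

/-- Sign character. -/
def sgn (δ : Fin n → Bool) : ℂ := ∏ i, (if δ i then -1 else 1)

theorem FL_DN (δ : Fin n → Bool) : FL δ (DN n) = sgn δ • DN n := by
  simp only [DN, map_mul, map_prod, map_sub, FL_dd, FL_xx]
  rw [Finset.prod_smul, smul_mul_assoc]
  rfl

theorem sg_xor (δ ε : Fin n → Bool) : sg (fun i => xor (δ i) (ε i)) = sgn δ * sg ε := by
  simp only [sg, sgn, ← Finset.prod_mul_distrib]
  refine Finset.prod_congr rfl fun i _ => ?_
  rcases Bool.eq_false_or_eq_true (δ i) with h | h <;>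
    rcases Bool.eq_false_or_eq_true (ε i) with h' | h' <;> simp [h, h']

theorem sgn_sq (δ : Fin n → Bool) : sgn δ * sgn δ = 1 := by
  simp only [sgn, ← Finset.prod_mul_distrib]
  refine Finset.prod_eq_one fun i _ => ?_
  cases δ i <;> simp

theorem FL_AL (δ : Fin n → Bool) (r : LR n) : FL δ (AL r) = sgn δ • AL r := by
  simp only [AL, map_sum, map_smul, FL_FL, Finset.smul_sum, smul_smul]
  have hinv : Function.Involutive (fun (ε : Fin n → Bool) => fun i => xor (δ i) (ε i)) := by
    intro ε; funext i; simp
  rw [← Equiv.sum_comp hinv.toPerm (fun ε => (sgn δ * sg ε) • FL ε r)]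
  refine Finset.sum_congr rfl fun ε _ => ?_
  simp only [Function.Involutive.coe_toPerm]
  rw [sg_xor, ← mul_assoc, sgn_sq, one_mul]

theorem PE_AL (σ : Equiv.Perm (Fin n)) (r : LR n) : PE σ (AL r) = AL (PE σ r) := by
  simp only [AL, map_sum, map_smul, PE_FL]
  rw [← Equiv.sum_comp (Equiv.arrowCongr σ.symm (Equiv.refl Bool)) (fun ε => sg ε • FL ε (PE σ r))]
  refine Finset.sum_congr rfl fun ε _ => ?_
  have h1 : (Equiv.arrowCongr σ.symm (Equiv.refl Bool)) ε = ε ∘ σ := by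
    funext i; simp [Equiv.arrowCongr]
  rw [h1]
  congr 1
  exact (Equiv.prod_comp σ (fun i => if ε i then (1 : ℂ) else -1)).symm

theorem Lead_xx (i j : Fin n) (h : i < j) : Lead (xx i - xx j) (Pi.single i 1) 1 := by
  have key : ∀ (l : Fin n) (k : ℤ) (a : ℂ), i ≤ l → k ≤ 1 → (l = i → k ≠ 1) →
      Lead (mo (Pi.single l k) a) (Pi.single i 1) 0 := by
    intro l k a h1 h2 h3
    apply Lead.mo_of_ne
    · rw [dom_iff]; intro m; rw [ps_single, ps_single]
      have : (i : ℕ) ≤ l := h1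
      split_ifs <;> omega
    · intro h4
      by_cases hl : l = i
      · subst hl
        have := congrFun h4 l
        simp at this
        exact h3 rfl this
      · have := congrFun h4 i
        rw [Pi.single_eq_of_ne (Ne.symm hl), Pi.single_eq_same] at this
        omega
  have e : xx i - xx j = ((mo (Pi.single i 1) 1 + mo (Pi.single i (-1)) 1)
      + (-1 : ℂ) • mo (Pi.single j 1) 1) + (-1 : ℂ) • mo (Pi.single j (-1)) 1 := by
    simp only [xx, neg_smul, one_smul]; ring
  rw [e]
  have := (((Lead.mo_self (Pi.single i 1) 1).add (key i (-1) 1 le_rfl (by norm_num)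
    (by norm_num))).add ((key j 1 1 h.le le_rfl (fun h' => absurd h' h.ne')).smul (-1))).add
      ((key j (-1) 1 h.le (by norm_num) (by norm_num)).smul (-1))
  simpa using this

theorem Lead_dd (i : Fin n) : Lead (dd i) (Pi.single i 1) 1 := by
  have e : dd i = mo (Pi.single i 1) 1 + (-1 : ℂ) • mo (Pi.single i (-1)) 1 := by
    simp only [dd, neg_smul, one_smul]; ring
  rw [e]
  have h2 : Lead (mo (Pi.single i (-1)) 1) (Pi.single i 1) 0 := by
    apply Lead.mo_of_ne
    · rw [dom_iff]; intro m; rw [ps_single, ps_single]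
      split_ifs <;> omega
    · intro h4
      have := congrFun h4 i
      simp at this
  simpa using (Lead.mo_self (Pi.single i 1) 1).add (h2.smul (-1))

/-- Exponent of the leading term of the denominator. -/
def rho (n : ℕ) : Fin n → ℤ :=
  (∑ i : Fin n, Pi.single i 1) + ∑ i : Fin n, ∑ _j ∈ Finset.Ioi i, Pi.single i 1

theorem Lead_DN : Lead (DN n) (rho n) 1 := by
  have h1 := Lead.prod Finset.univ (fun (i : Fin n) _ => Lead_dd i)
  have h2 := Lead.prod Finset.univ (fun (i : Fin n) _ =>
    Lead.prod (Finset.Ioi i) (fun j hj => Lead_xx i j (Finset.mem_Ioi.1 hj)))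
  simpa [DN, rho] using h1.mul h2

theorem DN_ne : DN n ≠ 0 := by
  intro h
  have := (Lead_DN (n := n)).2
  rw [h] at this
  simp at this

/-- The quotient exists and is invariant. -/
theorem exists_quot (d : ℤ) (a : ℤ → ℂ) (t s : ℂ) (hs : s ≠ 0) (f : LR n)
    (hf : ∀ σ, PE σ f = f) : ∃ g : LR n, AL (GG d a t s hs f) = DN n * g ∧
      (∀ σ, PE σ g = g) ∧ ∀ δ, FL δ g = g := by
  obtain ⟨g, hg⟩ := DN_dvd (G := GG d a t s hs f) fun σ => PE_GG d a t s hs f σ (hf σ)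
  refine ⟨g, hg, ?_, ?_⟩
  · intro σ
    have h := congrArg (PE σ) hg
    rw [PE_AL, PE_GG d a t s hs f σ (hf σ), map_mul, PE_DN] at h
    have h3 : AL ((Equiv.Perm.sign σ : ℤ) • GG d a t s hs f)
        = (Equiv.Perm.sign σ : ℤ) • AL (GG d a t s hs f) := by
      simp only [AL, map_zsmul, Finset.smul_sum]
      refine Finset.sum_congr rfl fun ε _ => smul_comm _ _ _
    rw [h3, hg, smul_mul_assoc] at h
    have h4 : DN n * g = DN n * PE σ g := by
      rcases Int.units_eq_one_or (Equiv.Perm.sign σ) with h5 | h5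
      · simpa [h5] using h
      · simpa [h5] using h
    exact (mul_left_cancel₀ DN_ne h4).symm
  · intro δ
    have h := congrArg (FL δ) hg
    rw [FL_AL, map_mul, FL_DN, hg, smul_mul_assoc] at h
    have h4 := congrArg (fun x => sgn δ • x) h
    simp only [smul_smul, sgn_sq, one_smul] at h4
    exact (mul_left_cancel₀ DN_ne h4).symm

end OpSec

end BCTri

namespace BCTri

section EvalSec

variable {n : ℕ}

theorem ZGood_flip {z : Fin n → ℂ} (hz : ZGood z) (ε : Fin n → Bool) : ZGood (signFlip ε z) := by
  obtain ⟨h0, h1, h2⟩ := hz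
  refine ⟨signFlip_ne ε h0, ?_, ?_⟩
  · intro i
    unfold signFlip
    split_ifs
    · rw [inv_pow]; exact fun h => h1 i (inv_eq_one.1 h)
    · exact h1 i
  · intro i j hij
    obtain ⟨ha, hb⟩ := h2 i j hij
    have hi := h0 i
    have hj := h0 j
    unfold signFlip
    split_ifs
    · refine ⟨fun h => ha ?_, fun h => hb (inv_injective h)⟩
      rw [← mul_inv] at h; exact inv_eq_one.1 h
    · refine ⟨fun h => hb ?_, fun h => ha ?_⟩
      · field_simp at h; exact h.symm
      · rw [← h]; field_simp
    · refine ⟨fun h => hb ?_, fun h => ha ?_⟩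
      · field_simp at h; exact h
      · rw [h]; field_simp
    · exact ⟨ha, hb⟩

theorem cross_eq (t : ℂ) (w : Fin n → ℂ) :
    crossFactor t w = ∏ i, ∏ j ∈ Finset.Ioi i, (1 - t * w i * w j) / (1 - w i * w j) := by
  unfold crossFactor
  refine Finset.prod_congr rfl fun i _ => ?_
  rw [← Finset.prod_filter]
  congr 1
  ext j; simp

theorem ev_xx (z : Fin n → ℂ) (hz : ∀ i, z i ≠ 0) (i : Fin n) :
    ev z hz (xx i) = z i + (z i)⁻¹ := by
  simp [xx, ev_single]

theorem ev_dd (z : Fin n → ℂ) (hz : ∀ i, z i ≠ 0) (i : Fin n) :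
    ev z hz (dd i) = z i - (z i)⁻¹ := by
  simp [dd, ev_single]

theorem ev_DN (z : Fin n → ℂ) (hz : ∀ i, z i ≠ 0) : ev z hz (DN n) =
    (∏ i, (z i - (z i)⁻¹)) * ∏ i, ∏ j ∈ Finset.Ioi i, (z i + (z i)⁻¹ - (z j + (z j)⁻¹)) := by
  simp only [DN, map_mul, map_prod, map_sub, ev_xx, ev_dd]

theorem ev_DN_ne (z : Fin n → ℂ) (hz : ZGood z) : ev z hz.1 (DN n) ≠ 0 := by
  rw [ev_DN]
  obtain ⟨h0, h1, h2⟩ := hz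
  refine mul_ne_zero (Finset.prod_ne_zero_iff.2 fun i _ => ?_)
    (Finset.prod_ne_zero_iff.2 fun i _ => Finset.prod_ne_zero_iff.2 fun j hj => ?_)
  · intro h
    apply h1 i
    have := h0 i
    field_simp at h
    linear_combination h
  · obtain ⟨ha, hb⟩ := h2 i j (Finset.mem_Ioi.1 hj).ne
    have hi := h0 i
    have hj := h0 j
    have : z i + (z i)⁻¹ - (z j + (z j)⁻¹) = (1 - z i * z j) * (z j - z i) / (z i * z j) := by
      field_simp; ring
    rw [this]
    exact div_ne_zero (mul_ne_zero (sub_ne_zero.2 (Ne.symm ha)) (sub_ne_zero.2 (Ne.symm hb)))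
      (mul_ne_zero hi hj)

theorem ev_GG (d : ℤ) (a : ℤ → ℂ) (t s : ℂ) (hs : s ≠ 0) (f : LR n) (w : Fin n → ℂ)
    (hw : ∀ i, w i ≠ 0) : ev w hw (GG d a t s hs f) =
      (∏ i, ∑ k ∈ Finset.Icc (-d) d, a k * w i ^ k) *
      (∏ i, ∏ j ∈ Finset.Ioi i, ((w i)⁻¹ - (w j)⁻¹) * (1 - t * w i * w j)) *
      ev (fun i => s * w i) (fun i => mul_ne_zero hs (hw i)) f := by
  simp only [GG, map_mul, map_prod, ev_SC]
  congr 2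
  · refine Finset.prod_congr rfl fun i _ => ?_
    simp only [pp, map_sum, ev_single]
  · refine Finset.prod_congr rfl fun i _ => Finset.prod_congr rfl fun j _ => ?_
    have hi := hw i
    have hj := hw j
    simp only [pr, map_add, map_sub, ev_single, zpow_neg, zpow_one]
    field_simp
    ring

theorem sg_eq (ε : Fin n → Bool) : sg ε = sgn ε * ∏ _i : Fin n, (-1 : ℂ) := by
  simp only [sg, sgn, ← Finset.prod_mul_distrib]
  refine Finset.prod_congr rfl fun i _ => ?_
  split_ifs <;> simp

theorem op_eval (d : ℤ) (a : ℤ → ℂ) (t s : ℂ) (hs : s ≠ 0) (f : LR n) (g : LR n)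
    (hg : AL (GG d a t s hs f) = DN n * g) (P : ℂ → ℂ)
    (hP : ∀ w, w ≠ 0 → w ^ 2 ≠ 1 →
      P w * (w⁻¹ - w) = ∑ k ∈ Finset.Icc (-d) d, a k * w ^ k)
    (F : (Fin n → ℂ) → ℂ) (hF : ∀ z hz, F z = ev z hz f) (z : Fin n → ℂ) (hz : ZGood z) :
    ∑ ε : Fin n → Bool, (∏ i, P (signFlip ε z i)) * crossFactor t (signFlip ε z) *
      F (fun i => s * signFlip ε z i) = ev z hz.1 g := by
  apply mul_left_cancel₀ (ev_DN_ne z hz)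
  rw [← map_mul, ← hg]
  simp only [AL, map_sum, map_smul, smul_eq_mul, ev_FL]
  rw [Finset.mul_sum]
  refine Finset.sum_congr rfl fun ε _ => ?_
  have hw := ZGood_flip hz ε
  have h1 : ev z hz.1 (DN n) = sgn ε * ev (signFlip ε z) hw.1 (DN n) := by
    rw [← ev_FL, FL_DN, map_smul, smul_eq_mul, ← mul_assoc, sgn_sq, one_mul]
  rw [h1, ev_GG, sg_eq, ev_DN, hF _ (fun i => mul_ne_zero hs (hw.1 i)), cross_eq]
  generalize ev (fun i => s * signFlip ε z i) (fun i => mul_ne_zero hs (hw.1 i)) f = E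
  clear h1
  revert hw
  generalize signFlip ε z = w
  intro hw
  have h2 : ∀ i, ∑ k ∈ Finset.Icc (-d) d, a k * w i ^ k = -1 * ((w i - (w i)⁻¹) * P (w i)) := by
    intro i
    rw [← hP _ (hw.1 i) (hw.2.1 i)]; ring
  have h3 : ∀ i, ∀ j ∈ Finset.Ioi i, ((w i)⁻¹ - (w j)⁻¹) * (1 - t * w i * w j) =
      (w i + (w i)⁻¹ - (w j + (w j)⁻¹)) * ((1 - t * w i * w j) / (1 - w i * w j)) := by
    intro i j hj
    have h4 : 1 - w i * w j ≠ 0 := sub_ne_zero.2 (Ne.symm (hw.2.2 i j (Finset.mem_Ioi.1 hj).ne).1)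
    have hi := hw.1 i
    have hj := hw.1 j
    field_simp
    ring
  rw [Finset.prod_congr rfl fun i _ => h2 i,
    Finset.prod_congr rfl fun i _ => Finset.prod_congr rfl (h3 i)]
  simp only [Finset.prod_mul_distrib]
  have h5 : (∏ _i : Fin n, (-1 : ℂ)) * ∏ _i : Fin n, (-1 : ℂ) = 1 := by
    rw [← Finset.prod_mul_distrib]; simp
  linear_combination (-sgn ε * (∏ i, (w i - (w i)⁻¹)) * (∏ i, P (w i)) *
    (∏ i, ∏ j ∈ Finset.Ioi i, (w i + (w i)⁻¹ - (w j + (w j)⁻¹))) *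
    (∏ i, ∏ j ∈ Finset.Ioi i, ((1 - t * w i * w j) / (1 - w i * w j))) *
    E) * h5

/-- Invariant elements give symmetric functions. -/
theorem sym_of_inv (g : LR n) (h1 : ∀ σ, PE σ g = g) (h2 : ∀ δ, FL δ g = g) :
    IsBCSymmetric n (fun z => g.coeff.sum fun m a => a * ∏ i, z i ^ m i) := by
  refine ⟨⟨g.coeff, fun z _ => rfl⟩, ?_, ?_⟩
  · intro σ z hz
    have := ev_PE σ.symm z hz g
    rw [h1, ev_apply, ev_apply] at this
    simpa using this.symm
  · intro k z hz
    have := ev_FL (fun i => decide (i = k)) z hz g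
    rw [h2, ev_apply, ev_apply] at this
    have e : signFlip (fun i => decide (i = k)) z = Function.update z k (z k)⁻¹ := by
      funext i
      by_cases hi : i = k
      · subst hi; simp [signFlip]
      · simp [signFlip, hi]
    rw [e] at this
    exact this.symm

theorem inv_of_sym {f : (Fin n → ℂ) → ℂ} (hf : IsBCSymmetric n f) :
    ∃ r : LR n, (∀ z hz, f z = ev z hz r) ∧ ∀ σ, PE σ r = r := by
  obtain ⟨⟨c, hc⟩, h1, -⟩ := hf
  refine ⟨AddMonoidAlgebra.ofCoeff c, ?_, ?_⟩
  · intro z hz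
    rw [hc z hz, ev_apply]
  · intro σ
    apply ev_inj
    intro z hz
    rw [ev_PE, ev_apply, ev_apply]
    have := h1 σ.symm z hz
    rw [hc _ hz, hc (z ∘ σ.symm) (fun i => hz _)] at this
    exact this

theorem part_one (d : ℤ) (a : ℤ → ℂ) (t s : ℂ) (hs : s ≠ 0) (P : ℂ → ℂ)
    (hP : ∀ w, w ≠ 0 → w ^ 2 ≠ 1 →
      P w * (w⁻¹ - w) = ∑ k ∈ Finset.Icc (-d) d, a k * w ^ k)
    (f : (Fin n → ℂ) → ℂ) (hf : IsBCSymmetric n f) : ∃ g, IsBCSymmetric n g ∧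
      ∀ z, ZGood z → ∑ ε : Fin n → Bool, (∏ i, P (signFlip ε z i)) * crossFactor t (signFlip ε z) *
      f (fun i => s * signFlip ε z i) = g z := by
  obtain ⟨r, hr, hr2⟩ := inv_of_sym hf
  obtain ⟨g, hg, hg1, hg2⟩ := exists_quot d a t s hs r hr2
  refine ⟨_, sym_of_inv g hg1 hg2, ?_⟩
  intro z hz
  rw [op_eval d a t s hs r g hg P hP f hr z hz, ev_apply]

end EvalSec

end BCTri

namespace BCTri

section TriSec

variable {n : ℕ}

theorem mem_orbit {κ μ : Fin n → ℤ} :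
    μ ∈ signedOrbit n κ ↔ ∃ (σ : Equiv.Perm (Fin n)) (ε : Fin n → Bool), flipM ε (κ ∘ σ) = μ := by
  unfold signedOrbit
  simp only [Finset.mem_image, Finset.mem_univ, true_and, Prod.exists]
  rfl

theorem orbit_self (κ : Fin n → ℤ) : κ ∈ signedOrbit n κ := by
  rw [mem_orbit]
  refine ⟨1, fun _ => false, ?_⟩
  funext i; simp [flipM_apply]

theorem orbit_flip {κ μ : Fin n → ℤ} (ε : Fin n → Bool) (h : μ ∈ signedOrbit n κ) :
    flipM ε μ ∈ signedOrbit n κ := by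
  rw [mem_orbit] at *
  obtain ⟨σ, δ, rfl⟩ := h
  refine ⟨σ, fun i => xor (ε i) (δ i), ?_⟩
  funext i
  simp only [flipM_apply]
  rcases Bool.eq_false_or_eq_true (ε i) with h | h <;>
    rcases Bool.eq_false_or_eq_true (δ i) with h' | h' <;> simp [h, h']

theorem orbit_perm {κ μ : Fin n → ℤ} (τ : Equiv.Perm (Fin n)) (h : μ ∈ signedOrbit n κ) :
    μ ∘ τ ∈ signedOrbit n κ := by
  rw [mem_orbit] at *
  obtain ⟨σ, δ, rfl⟩ := h
  exact ⟨σ * τ, δ ∘ τ, rfl⟩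

/-- The orbit sum as an element of the group algebra. -/
noncomputable def orb (κ : Fin n → ℤ) : LR n := ∑ μ ∈ signedOrbit n κ, mo μ 1

theorem ev_orb (κ : Fin n → ℤ) (z : Fin n → ℂ) (hz : ∀ i, z i ≠ 0) :
    bcMono n κ z = ev z hz (orb κ) := by
  simp [bcMono, orb, ev_mo]

theorem PE_orb (κ : Fin n → ℤ) (σ : Equiv.Perm (Fin n)) : PE σ (orb κ) = orb κ := by
  simp only [orb, map_sum, PE_mo]
  refine Finset.sum_bij' (fun μ _ => μ ∘ σ) (fun μ _ => μ ∘ (σ⁻¹ : Equiv.Perm (Fin n)))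
    (fun μ h => orbit_perm σ h) (fun μ h => orbit_perm σ⁻¹ h) ?_ ?_ ?_
  · intro μ _; funext i; simp
  · intro μ _; funext i; simp
  · intro μ _; rfl

theorem ps_perm_le {lam : Fin n → ℕ} (hlam : IsPartition lam) (σ : Equiv.Perm (Fin n)) (k : ℕ) :
    ps k (natToZ lam ∘ σ) ≤ ps k (natToZ lam) := by
  have hm : Monovary (fun i : Fin n => if (i : ℕ) < k then (1 : ℤ) else 0) (natToZ lam) := by
    intro i j h
    have h1 : ¬ (i ≤ j) := by
      intro h2
      have h3 := hlam h2
      simp only [natToZ] at h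
      omega
    have h2 : (j : ℕ) < i := not_le.1 h1
    dsimp only
    split_ifs <;> omega
  have := hm.sum_mul_comp_perm_le_sum_mul (σ := σ)
  simpa [ps, Finset.sum_filter, ite_mul] using this

theorem orbit_dom {lam : Fin n → ℕ} (hlam : IsPartition lam) {μ : Fin n → ℤ}
    (h : μ ∈ signedOrbit n (natToZ lam)) : Dominates (natToZ lam) μ := by
  rw [mem_orbit] at h
  obtain ⟨σ, ε, rfl⟩ := h
  rw [dom_iff]
  intro k
  refine le_trans ?_ (ps_perm_le hlam σ k)
  simp only [ps, AddMonoidHom.coe_mk, ZeroHom.coe_mk]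
  refine Finset.sum_le_sum fun i _ => ?_
  simp only [flipM_apply, Function.comp, natToZ]
  split_ifs <;> omega

theorem Lead_FL_orb {lam : Fin n → ℕ} (hlam : IsPartition lam) (ε : Fin n → Bool) (s : ℂ)
    (hs : s ≠ 0) : Lead (FL ε (SC s hs (orb (natToZ lam)))) (natToZ lam)
      (∏ i, s ^ (if ε i then -(lam i : ℤ) else lam i)) := by
  classical
  simp only [orb, map_sum, SC_mo, FL_mo, one_mul]
  have h := Lead.sum (signedOrbit n (natToZ lam))
    (r := fun μ => mo (flipM ε μ) (∏ i, s ^ μ i)) (κ := natToZ lam)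
    (c := fun μ => if μ = flipM ε (natToZ lam) then ∏ i, s ^ μ i else 0) (by
      intro μ hμ
      split_ifs with h1
      · rw [h1, flipM_flipM]
        exact Lead.mo_self _ _
      · refine Lead.mo_of_ne (orbit_dom hlam (orbit_flip ε hμ)) ?_ _
        intro h2
        apply h1
        rw [← h2, flipM_flipM])
  rw [Finset.sum_ite_eq', if_pos (orbit_flip ε (orbit_self _))] at h
  exact h

theorem Lead_low (i l : Fin n) (d k : ℤ) (a : ℂ) (h1 : i ≤ l) (h0 : 0 ≤ d) (h2 : k ≤ d)
    (h3 : l = i → k ≠ d) (h4 : d = 0 → l = i) :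
    Lead (mo (Pi.single l k) a) (Pi.single i d) 0 := by
  apply Lead.mo_of_ne
  · rw [dom_iff]; intro m; rw [ps_single, ps_single]
    have : (i : ℕ) ≤ l := h1
    split_ifs <;> omega
  · intro h5
    by_cases hl : l = i
    · subst hl
      have := congrFun h5 l
      simp at this
      exact h3 rfl this
    · have := congrFun h5 i
      rw [Pi.single_eq_of_ne (Ne.symm hl), Pi.single_eq_same] at this
      exact hl (h4 this.symm)

theorem Lead_FL_pp (d : ℤ) (hd : 0 ≤ d) (a : ℤ → ℂ) (ε : Fin n → Bool) (i : Fin n) :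
    Lead (FL ε (pp d a i)) (Pi.single i d) (if ε i then a (-d) else a d) := by
  classical
  simp only [pp, map_sum, FL_mo, flipM_single]
  have h := Lead.sum (Finset.Icc (-d) d)
    (r := fun k => mo (Pi.single i (if ε i then -k else k)) (a k)) (κ := Pi.single i d)
    (c := fun k => if k = (if ε i then -d else d) then a k else 0) (by
      intro k hk
      rw [Finset.mem_Icc] at hk
      by_cases h1 : k = (if ε i then -d else d)
      · rw [if_pos h1]
        have : (if ε i then -k else k) = d := by rw [h1]; split_ifs <;> simp
        rw [this]
        exact Lead.mo_self _ _
      · rw [if_neg h1]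
        refine Lead_low i i d _ _ le_rfl hd ?_ ?_ (fun _ => rfl)
        · split_ifs <;> omega
        · intro _
          split_ifs at h1 ⊢ <;> omega)
  rw [Finset.sum_ite_eq', if_pos (by rw [Finset.mem_Icc]; split_ifs <;> omega)] at h
  split_ifs at h ⊢ <;> exact h

theorem Lead_FL_pr (t : ℂ) (ε : Fin n → Bool) (i j : Fin n) (hij : i < j) :
    Lead (FL ε (pr t i j)) (Pi.single i 1) (if ε i then 1 else t) := by
  have e : FL ε (pr t i j) = ((mo (Pi.single i (if ε i then 1 else -1)) 1
      + (-1 : ℂ) • mo (Pi.single j (if ε j then 1 else -1)) 1)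
      + (-1 : ℂ) • mo (Pi.single j (if ε j then -1 else 1)) t)
      + mo (Pi.single i (if ε i then -1 else 1)) t := by
    simp only [pr, map_add, map_sub, FL_mo, flipM_single, neg_smul, one_smul, neg_neg]
    ring
  rw [e]
  have hj : ∀ (k : ℤ) (a : ℂ), k ≤ 1 → Lead (mo (Pi.single j k) a) (Pi.single i 1) 0 :=
    fun k a hk => Lead_low i j 1 k a hij.le (by norm_num) hk (fun h => absurd h hij.ne')
      (by norm_num)
  have h2 := (hj (if ε j then 1 else -1) 1 (by split_ifs <;> norm_num)).smul (-1)
  have h3 := (hj (if ε j then -1 else 1) t (by split_ifs <;> norm_num)).smul (-1)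
  have hi : ∀ a : ℂ, Lead (mo (Pi.single i (-1)) a) (Pi.single i 1) 0 :=
    fun a => Lead_low i i 1 (-1) a le_rfl (by norm_num) (by norm_num) (by norm_num) (by norm_num)
  by_cases h : ε i
  · simp only [h, if_true]
    simpa using (((Lead.mo_self (Pi.single i 1) 1).add h2).add h3).add (hi t)
  · simp only [h]
    simpa using (((hi 1).add h2).add h3).add (Lead.mo_self (Pi.single i 1) t)

theorem Lead_AL (d : ℤ) (hd : 0 ≤ d) (a : ℤ → ℂ) (t s : ℂ) (hs : s ≠ 0) {lam : Fin n → ℕ}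
    (hlam : IsPartition lam) :
    Lead (AL (GG d a t s hs (orb (natToZ lam)))) (rho n + fun i => (lam i : ℤ) + (d - 1))
      (∏ i : Fin n, (a (-d) * s ^ (-(lam i : ℤ)) - a d * t ^ (n - 1 - (i : ℕ)) * s ^ (lam i : ℤ))) := by
  have hκ : (∑ i : Fin n, Pi.single i d) + (∑ i : Fin n, ∑ _j ∈ Finset.Ioi i, Pi.single i 1) +
      natToZ lam = rho n + fun i => (lam i : ℤ) + (d - 1) := by
    have h1 : ∀ c : ℤ, (∑ i : Fin n, Pi.single i c) = fun _ => c := fun c =>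
      Finset.univ_sum_single (fun _ => c)
    unfold rho
    rw [h1, h1]
    funext i
    simp only [Pi.add_apply, natToZ]
    ring
  have h : ∀ ε ∈ (Finset.univ : Finset (Fin n → Bool)),
      Lead (sg ε • FL ε (GG d a t s hs (orb (natToZ lam)))) (rho n + fun i => (lam i : ℤ) + (d - 1))
        (∏ i : Fin n, (if ε i then a (-d) * s ^ (-(lam i : ℤ)) else
          -(a d * t ^ (n - 1 - (i : ℕ)) * s ^ (lam i : ℤ)))) := by
    intro ε _
    have h1 := Lead.prod Finset.univ (fun (i : Fin n) _ => Lead_FL_pp d hd a ε i)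
    have h2 := Lead.prod Finset.univ (fun (i : Fin n) _ =>
      Lead.prod (Finset.Ioi i) (fun j hj => Lead_FL_pr t ε i j (Finset.mem_Ioi.1 hj)))
    have h3 := ((h1.mul h2).mul (Lead_FL_orb hlam ε s hs)).smul (sg ε)
    rw [hκ] at h3
    simp only [GG, map_mul, map_prod]
    convert h3 using 1
    simp only [sg, ← Finset.prod_mul_distrib]
    refine Finset.prod_congr rfl fun i _ => ?_
    rw [Finset.prod_const, Fin.card_Ioi]
    by_cases hi : ε i
    · simp [hi]
    · simp [hi]
  have h4 := Lead.sum _ h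
  unfold AL
  convert h4 using 1
  have h5 := Finset.prod_univ_sum (fun _ : Fin n => (Finset.univ : Finset Bool))
    (fun i b => if b then a (-d) * s ^ (-(lam i : ℤ)) else
          -(a d * t ^ (n - 1 - (i : ℕ)) * s ^ (lam i : ℤ)))
  rw [Fintype.piFinset_univ] at h5
  rw [← h5]
  refine Finset.prod_congr rfl fun i _ => ?_
  simp [sub_eq_add_neg]

end TriSec

end BCTri

namespace BCTri

section ExpandSec

variable {n : ℕ}

theorem natToZ_inj : Function.Injective (natToZ (n := n)) := by
  intro a b h
  funext i
  have := congrFun h i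
  simpa [natToZ] using this

theorem exists_part (α : Fin n → ℤ) :
    ∃ μ : Fin n → ℕ, IsPartition μ ∧ α ∈ signedOrbit n (natToZ μ) := by
  let f : Fin n → ℕ := fun i => (α i).natAbs
  let σ := Tuple.sort (fun i => OrderDual.toDual (f i))
  have hm := Tuple.monotone_sort (fun i => OrderDual.toDual (f i))
  refine ⟨f ∘ σ, fun i j h => hm h, ?_⟩
  rw [mem_orbit]
  refine ⟨σ⁻¹, fun i => decide (α i < 0), ?_⟩
  funext i
  have hσ : σ (σ⁻¹ i) = i := by simp
  simp only [flipM_apply, natToZ, Function.comp, decide_eq_true_eq, hσ, f]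
  split_ifs <;> omega

theorem part_unique {α : Fin n → ℤ} {μ ν : Fin n → ℕ} (hμ : IsPartition μ) (hν : IsPartition ν)
    (h1 : α ∈ signedOrbit n (natToZ μ)) (h2 : α ∈ signedOrbit n (natToZ ν)) : μ = ν := by
  rw [mem_orbit] at h1 h2
  obtain ⟨σ, ε, h1⟩ := h1
  obtain ⟨τ, δ, h2⟩ := h2
  have h3 : μ ∘ σ = ν ∘ τ := by
    funext i
    have h4 := congrFun (h1.trans h2.symm) i
    simp only [flipM_apply, Function.comp, natToZ] at h4 ⊢
    split_ifs at h4 <;> omega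
  have h5 : μ = ν ∘ (τ * σ⁻¹ : Equiv.Perm (Fin n)) := by
    funext i
    have := congrFun h3 (σ⁻¹ i)
    simpa using this
  have h6 := Tuple.unique_antitone (f := ν) (σ := τ * σ⁻¹) (τ := 1) (by rw [← h5]; exact hμ)
    hν
  rw [h5, h6]; simp

theorem inv_coeff {g : LR n} (h1 : ∀ σ, PE σ g = g) (h2 : ∀ δ, FL δ g = g) {κ α : Fin n → ℤ}
    (h : α ∈ signedOrbit n κ) : g.coeff α = g.coeff κ := by
  rw [mem_orbit] at h
  obtain ⟨σ, ε, rfl⟩ := h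
  have h3 := FL_coeff ε g (κ ∘ σ)
  have h4 := PE_coeff σ g κ
  rw [h2] at h3
  rw [h1] at h4
  rw [h3, h4]

theorem orb_coeff (κ α : Fin n → ℤ) [Decidable (α ∈ signedOrbit n κ)] :
    (orb κ).coeff α = if α ∈ signedOrbit n κ then 1 else 0 := by
  classical
  simp only [orb, AddMonoidAlgebra.coeff_sum, mo, AddMonoidAlgebra.coeff_single,
    Finsupp.finsetSum_apply, Finsupp.single_apply]
  rw [Finset.sum_ite_eq']
  congr

open Classical in
/-- Coefficients on partitions. -/
noncomputable def cT (g : LR n) : (Fin n → ℕ) →₀ ℂ :=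
  (Finsupp.comapDomain natToZ g.coeff natToZ_inj.injOn).filter IsPartition

theorem cT_apply {g : LR n} {μ : Fin n → ℕ} (h : IsPartition μ) : cT g μ = g.coeff (natToZ μ) := by
  simp [cT, Finsupp.filter_apply_pos, h]

theorem cT_supp {g : LR n} {μ : Fin n → ℕ} (h : μ ∈ (cT g).support) :
    IsPartition μ ∧ g.coeff (natToZ μ) ≠ 0 := by
  simp only [cT, Finsupp.support_filter, Finset.mem_filter] at h
  exact ⟨h.2, by simpa using h.1⟩

theorem g_eq {g : LR n} (h1 : ∀ σ, PE σ g = g) (h2 : ∀ δ, FL δ g = g) :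
    g = ∑ μ ∈ (cT g).support, cT g μ • orb (natToZ μ) := by
  classical
  ext α
  simp only [AddMonoidAlgebra.coeff_sum, Finsupp.finsetSum_apply, AddMonoidAlgebra.coeff_smul,
    Finsupp.smul_apply, orb_coeff, smul_eq_mul]
  obtain ⟨μ, hμ, hα⟩ := exists_part α
  rw [Finset.sum_eq_single μ]
  · rw [if_pos hα, mul_one, cT_apply hμ, inv_coeff h1 h2 hα]
  · intro ν hν hne
    rw [if_neg, mul_zero]
    intro h
    exact hne (part_unique (cT_supp hν).1 hμ h hα)
  · intro h
    rw [Finsupp.notMem_support_iff.1 h, zero_mul]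

theorem expand_final {g : LR n} (h1 : ∀ σ, PE σ g = g) (h2 : ∀ δ, FL δ g = g) {κ : Fin n → ℤ}
    {c : ℂ} (hL : Lead g κ c) (hc : (¬ ∃ μ : Fin n → ℕ, IsPartition μ ∧ κ = natToZ μ) → c = 0)
    (F : (Fin n → ℂ) → ℂ) (hF : ∀ z (hz : ZGood z), F z = ev z hz.1 g) :
    ExpandsWithLead n F c κ := by
  classical
  have hev : ∀ z (hz : ZGood z), F z = (cT g).sum fun μ a => a * bcMono n (natToZ μ) z := by
    intro z hz
    rw [hF z hz]
    conv_lhs => rw [g_eq h1 h2]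
    simp only [map_sum, map_smul, smul_eq_mul, Finsupp.sum, ev_orb _ z hz.1]
  by_cases h : ∃ μ : Fin n → ℕ, IsPartition μ ∧ κ = natToZ μ
  · obtain ⟨μ, hμ, rfl⟩ := h
    refine ⟨(cT g).erase μ, ?_, ?_⟩
    · intro ν hν
      rw [Finsupp.support_erase, Finset.mem_erase] at hν
      obtain ⟨hp, hne⟩ := cT_supp hν.2
      exact ⟨hp, hL.1 _ hne, fun h => hν.1 (natToZ_inj h)⟩
    · intro z hz
      rw [hev z hz, ← Finsupp.add_sum_erase' _ μ _ (by simp), cT_apply hμ, hL.2]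
  · have h0 := hc h
    refine ⟨cT g, ?_, ?_⟩
    · intro ν hν
      obtain ⟨hp, hne⟩ := cT_supp hν
      exact ⟨hp, hL.1 _ hne, fun h' => h ⟨ν, hp, h'.symm⟩⟩
    · intro z hz
      rw [h0, zero_mul, zero_add, hev z hz]

theorem part_two (d : ℤ) (hd : 0 ≤ d) (a : ℤ → ℂ) (t s q : ℂ) (hs : s ≠ 0) (hq : s ^ 2 = q)
    (P : ℂ → ℂ)
    (hP : ∀ w, w ≠ 0 → w ^ 2 ≠ 1 →
      P w * (w⁻¹ - w) = ∑ k ∈ Finset.Icc (-d) d, a k * w ^ k)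
    (ha : a (-d) = 1) {lam : Fin n → ℕ} (hlam : IsPartition lam) (F : (Fin n → ℂ) → ℂ)
    (hF : ∀ z, F z = ∑ ε : Fin n → Bool, (∏ i, P (signFlip ε z i)) * crossFactor t (signFlip ε z) *
      bcMono n (natToZ lam) (fun i => s * signFlip ε z i)) :
    ExpandsWithLead n F
      (s⁻¹ ^ (∑ i, lam i) * ∏ i : Fin n, (1 - q ^ lam i * t ^ (n - 1 - (i : ℕ)) * a d))
      (fun i => (lam i : ℤ) + (d - 1)) := by
  obtain ⟨g, hg, hg1, hg2⟩ := exists_quot d a t s hs (orb (natToZ lam)) (PE_orb _)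
  have hL := Lead_AL d hd a t s hs hlam
  rw [hg] at hL
  have hL2 := Lead.cancel Lead_DN hL
  have hc : (∏ i : Fin n, (a (-d) * s ^ (-(lam i : ℤ)) - a d * t ^ (n - 1 - (i : ℕ)) *
      s ^ (lam i : ℤ))) =
      s⁻¹ ^ (∑ i, lam i) * ∏ i : Fin n, (1 - q ^ lam i * t ^ (n - 1 - (i : ℕ)) * a d) := by
    rw [← Finset.prod_pow_eq_pow_sum, ← Finset.prod_mul_distrib]
    refine Finset.prod_congr rfl fun i _ => ?_
    rw [ha, ← hq, zpow_neg, zpow_natCast, ← pow_mul, inv_pow]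
    have : s ^ lam i ≠ 0 := pow_ne_zero _ hs
    rw [mul_comm 2, pow_mul]
    field_simp
  rw [hc] at hL2
  refine expand_final hg1 hg2 hL2 ?_ F ?_
  · intro hno
    by_cases hall : ∀ i, 0 ≤ (lam i : ℤ) + (d - 1)
    · exfalso
      apply hno
      refine ⟨fun i => ((lam i : ℤ) + (d - 1)).toNat, ?_, ?_⟩
      · intro i j hij
        have := hlam hij
        dsimp only
        omega
      · funext i
        simp only [natToZ]
        have := hall i
        omega
    · push Not at hall
      obtain ⟨i, hi⟩ := hall
      have hd0 : d = 0 := by omega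
      subst hd0
      have hn : n - 1 < n := by have := i.isLt; omega
      have hle : i ≤ ⟨n - 1, hn⟩ := by
        rw [Fin.le_def]; have := i.isLt; simp only; omega
      have h0 : lam ⟨n - 1, hn⟩ = 0 := by
        have := hlam hle
        omega
      rw [Finset.prod_eq_zero (Finset.mem_univ ⟨n - 1, hn⟩), mul_zero]
      rw [h0]
      rw [neg_zero] at ha
      simp [ha]
  · intro z hz
    rw [hF]
    exact op_eval d a t s hs _ g hg P hP _ (fun z hz => ev_orb _ z hz) z hz

theorem Icc_sum_one (a : ℤ → ℂ) (w : ℂ) : ∑ k ∈ Finset.Icc (-1 : ℤ) 1, a k * w ^ k =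
    a (-1) * w⁻¹ + a 0 + a 1 * w := by
  have : Finset.Icc (-1 : ℤ) 1 = {-1, 0, 1} := by decide
  rw [this]
  simp [add_assoc]

theorem Icc_sum_two (a : ℤ → ℂ) (w : ℂ) : ∑ k ∈ Finset.Icc (-2 : ℤ) 2, a k * w ^ k =
    a (-2) * (w⁻¹) ^ 2 + a (-1) * w⁻¹ + a 0 + a 1 * w + a 2 * w ^ 2 := by
  have : Finset.Icc (-2 : ℤ) 2 = {-2, -1, 0, 1, 2} := by decide
  rw [this]
  have h2 : w ^ (2 : ℤ) = w ^ 2 := zpow_natCast w 2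
  have h3 : w ^ (-2 : ℤ) = (w⁻¹) ^ 2 := by rw [zpow_neg, h2, inv_pow]
  simp [add_assoc, h2, h3]

end ExpandSec

end BCTri


/-- The difference operators `D^{-(n)}_q(t)`, `D^{(n)}_q(t₀,t₁;t)`, `D^{+(n)}_q(t₀,t₁,t₂,t₃;t)`
take `BC_n`-symmetric Laurent polynomials to `BC_n`-symmetric Laurent polynomials and act
triangularly on the monomials `m_λ`, with the stated leading coefficients. -/
theorem difference_operators_triangular (n : ℕ) (q sq t t0 t1 t2 t3 : ℂ)
    (hsq : sq ^ 2 = q) (hq0 : q ≠ 0) (lam : Fin n → ℕ) (hlam : IsPartition lam) :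
    ((∀ f, IsBCSymmetric n f → ∃ g, IsBCSymmetric n g ∧
        ∀ z, ZGood z → Dminus n sq t f z = g z) ∧
     (∀ f, IsBCSymmetric n f → ∃ g, IsBCSymmetric n g ∧
        ∀ z, ZGood z → Dmid n sq t0 t1 t f z = g z) ∧
     (∀ f, IsBCSymmetric n f → ∃ g, IsBCSymmetric n g ∧
        ∀ z, ZGood z → Dplus n sq t0 t1 t2 t3 t f z = g z)) ∧
    (ExpandsWithLead n (Dminus n sq t (bcMono n (natToZ lam)))
        (sq⁻¹ ^ (∑ i, lam i) * ∏ i : Fin n, (1 - q ^ lam i * t ^ (n - 1 - (i : ℕ))))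
        (fun i => (lam i : ℤ) - 1) ∧
     ExpandsWithLead n (Dmid n sq t0 t1 t (bcMono n (natToZ lam)))
        (sq⁻¹ ^ (∑ i, lam i) *
          ∏ i : Fin n, (1 - q ^ lam i * t ^ (n - 1 - (i : ℕ)) * (t0 * t1)))
        (natToZ lam) ∧
     ExpandsWithLead n (Dplus n sq t0 t1 t2 t3 t (bcMono n (natToZ lam)))
        (sq⁻¹ ^ (∑ i, lam i) *
          ∏ i : Fin n, (1 - q ^ lam i * t ^ (n - 1 - (i : ℕ)) * (t0 * t1 * t2 * t3)))
        (fun i => (lam i : ℤ) + 1)) := by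
  have hs : sq ≠ 0 := by
    rintro rfl
    apply hq0
    rw [← hsq]; simp
  let a0 : ℤ → ℂ := fun _ => 1
  let a1 : ℤ → ℂ := fun k => if k = -1 then 1 else if k = 0 then -(t0 + t1) else t0 * t1
  let a2 : ℤ → ℂ := fun k => if k = -2 then 1 else if k = -1 then -(t0 + t1 + t2 + t3)
    else if k = 0 then t0 * t1 + t0 * t2 + t0 * t3 + t1 * t2 + t1 * t3 + t2 * t3
    else if k = 1 then -(t0 * t1 * t2 + t0 * t1 * t3 + t0 * t2 * t3 + t1 * t2 * t3)
    else t0 * t1 * t2 * t3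
  have hP0 : ∀ w : ℂ, w ≠ 0 → w ^ 2 ≠ 1 →
      (w / (1 - w ^ 2)) * (w⁻¹ - w) = ∑ k ∈ Finset.Icc (-(0 : ℤ)) 0, a0 k * w ^ k := by
    intro w h0 h1
    have h2 : 1 - w ^ 2 ≠ 0 := sub_ne_zero.2 (Ne.symm h1)
    simp only [neg_zero, Finset.Icc_self, Finset.sum_singleton, a0, zpow_zero, mul_one]
    field_simp
  have hP1 : ∀ w : ℂ, w ≠ 0 → w ^ 2 ≠ 1 →
      ((1 - t0 * w) * (1 - t1 * w) / (1 - w ^ 2)) * (w⁻¹ - w)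
        = ∑ k ∈ Finset.Icc (-(1 : ℤ)) 1, a1 k * w ^ k := by
    intro w h0 h1
    have h2 : 1 - w ^ 2 ≠ 0 := sub_ne_zero.2 (Ne.symm h1)
    rw [BCTri.Icc_sum_one]
    simp only [a1]
    norm_num
    field_simp
    ring
  have hP2 : ∀ w : ℂ, w ≠ 0 → w ^ 2 ≠ 1 →
      ((1 - t0 * w) * (1 - t1 * w) * (1 - t2 * w) * (1 - t3 * w) / (w * (1 - w ^ 2))) * (w⁻¹ - w)
        = ∑ k ∈ Finset.Icc (-(2 : ℤ)) 2, a2 k * w ^ k := by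
    intro w h0 h1
    have h2 : 1 - w ^ 2 ≠ 0 := sub_ne_zero.2 (Ne.symm h1)
    rw [BCTri.Icc_sum_two]
    simp only [a2]
    norm_num
    field_simp
    ring
  refine ⟨⟨?_, ?_, ?_⟩, ?_, ?_, ?_⟩
  · exact fun f hf => BCTri.part_one 0 a0 t sq hs _ hP0 f hf
  · exact fun f hf => BCTri.part_one 1 a1 t sq hs _ hP1 f hf
  · exact fun f hf => BCTri.part_one 2 a2 t sq hs _ hP2 f hf
  · have h := BCTri.part_two 0 le_rfl a0 t sq q hs hsq _ hP0 rfl hlam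
      (Dminus n sq t (bcMono n (natToZ lam))) (fun z => rfl)
    simpa [a0, sub_eq_add_neg] using h
  · have h := BCTri.part_two 1 (by norm_num) a1 t sq q hs hsq _ hP1 (by simp [a1]) hlam
      (Dmid n sq t0 t1 t (bcMono n (natToZ lam))) (fun z => rfl)
    have e : a1 1 = t0 * t1 := by simp [a1]
    rw [e] at h
    have e2 : (fun i => (lam i : ℤ) + (1 - 1)) = natToZ lam := by funext i; simp [natToZ]
    rw [e2] at h
    exact h
  · have h := BCTri.part_two 2 (by norm_num) a2 t sq q hs hsq _ hP2 (by simp [a2]) hlam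
      (Dplus n sq t0 t1 t2 t3 t (bcMono n (natToZ lam))) (fun z => rfl)
    have e : a2 2 = t0 * t1 * t2 * t3 := by simp [a2]
    rw [e] at h
    exact h
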